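/- For every Schwartz function f on ℝ² and every t ≠ 0, the half-wave flow obeys the dispersive estimate ‖ e^{−itΛ^{1/2}} f ‖_{L^∞(ℝ²)} ≤ C |t|^{−1} Σ_{k=0}^{3} Σ_{ℓ ∈ ℤ} 2^{ℓ/2} ( ‖ Σ Ω^k P_ℓ f ‖_{L²(ℝ²)} + ‖ Ω^k P_ℓ f ‖_{L²(ℝ²)} ), with C an absolute constant. -/

import Mathlib

/-!
STATEMENT 15: Dispersive estimate for the half-wave flow `e^{−itΛ^{1/2}}` (`Λ = |∇|`)
on `ℝ²`: for every Schwartz `f` and `t ≠ 0`,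
`‖e^{−itΛ^{1/2}} f‖_{L^∞} ≤ C |t|^{−1} Σ_{k=0}^{3} Σ_{ℓ∈ℤ} 2^{ℓ/2}
  (‖Σ Ω^k P_ℓ f‖_{L²} + ‖Ω^k P_ℓ f‖_{L²})`,
with `P_ℓ` the Littlewood–Paley projections built from a fixed cutoff `φ`, `Ω` the
rotation field and `Σ` the scaling field.
-/

/-!
The flow at `x` is `∫ e^{2πi⟨ξ,x⟩ - it|ξ|^{1/2}} f̂(ξ) dξ`. The profile is cut into its
Littlewood–Paley pieces `h = φ_ℓ f̂` (`locS`), each supported in an annulus `A ≤ |ξ| ≤ 4A` with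
`A = 2^ℓ / 2`, and every piece is shown to contribute at most
`C √A |t|⁻¹ (‖Σh‖₂ + ‖ΩΣh‖₂)` (`piece_bound`), uniformly in `x`.

For one piece, polar coordinates `ξ = A s ω(θ)`, with the angle measured from the direction of
`x`, and the substitution `t ↦ t √A` reduce to the integral over `1 ≤ s ≤ 4`, `0 ≤ θ ≤ 2π` of
`e^{i(r cos θ s - t √s)} s H(s, θ)`, where `r = 2π|x|A` (`polar_core`). Integration by parts in `s`
puts one radial derivative on `H`, that is `Σh`, and leaves the truncated radial integrals
`W(r cos θ, s) = ∫₁ˢ e^{i(r cos θ σ - t √σ)} σ dσ`. It then suffices to bound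
`∫ W(r cos θ, s) G(θ) dθ` by `C |t|⁻¹ ∫ (|G| + |G'|)` for fixed `s` (`quarter_bound`, `period_bound`):

* if `|t| ≤ 1` the trivial bound is enough;
* if `|r| ≤ |t| / 8` the radial phase has no critical point, and the first derivative test gives
  `|W| ≤ C |t|⁻¹`;
* if `|r| > |t| / 8` the second derivative test gives `C |t|^{-1/2}` for `W` and for the same
  integral `V` without the weight `σ`. Angles within `|t|^{-1/2}` of the axis are estimated
  trivially; away from it, `∂_θ V = -i r sin θ W` allows an integration by parts in `θ`, which
  gains `(|r| θ)⁻¹`.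

Cauchy–Schwarz on the annulus turns the `L¹` norms of the amplitude into `L²` norms. Since the
Fourier transform intertwines `Ω` with `Ω` and `Σ` with `-(2 + Σ)`, Plancherel returns to the norms
of `P_ℓ f` (`freq_norms_le_term`). Only the terms `k = 0, 1` are needed. Their sums over `ℓ`
converge, so that the infinite sums dominate all finite partial sums (`summable_term_zero`,
`summable_term_one`); the partial sums of the pieces converge to the flow by dominated
convergence (`tendsto_sum_flowPiece`).
-/

open MeasureTheory
open scoped FourierTransform

noncomputable section

abbrev E2 := EuclideanSpace ℝ (Fin 2)

/-- Fourier multiplier on `ℝ²` with symbol `m`. -/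
def fm (m : E2 → ℂ) (g : E2 → ℂ) : E2 → ℂ := fun x => 𝓕⁻ (fun ξ => m ξ * 𝓕 g ξ) x

/-- The Littlewood–Paley projection `P_ℓ` built from the cutoff `φ`:
its symbol is `φ_ℓ(ξ) = φ(2^{−ℓ}|ξ|) − φ(2^{−ℓ+1}|ξ|)`. -/
def LP (φ : ℝ → ℝ) (ℓ : ℤ) (g : E2 → ℂ) : E2 → ℂ :=
  fm (fun ξ => ((φ ((2 : ℝ) ^ (-ℓ) * ‖ξ‖) - φ ((2 : ℝ) ^ (-ℓ + 1) * ‖ξ‖) : ℝ) : ℂ)) g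

/-- The vector `(−x₂, x₁)`, generator of rotations in the plane. -/
def rotv (x : E2) : E2 :=
  EuclideanSpace.single (0 : Fin 2) (-(x 1)) + EuclideanSpace.single (1 : Fin 2) (x 0)

/-- The scaling vector field `Σg(x) = x₁∂₁g + x₂∂₂g`. -/
def Sc (g : E2 → ℂ) : E2 → ℂ := fun x => fderiv ℝ g x x

/-- The rotation vector field `Ωg(x) = x₁∂₂g − x₂∂₁g`. -/
def Om (g : E2 → ℂ) : E2 → ℂ := fun x => fderiv ℝ g x (rotv x)

/-- The `L²(ℝ²)` norm. -/
def L2n (g : E2 → ℂ) : ℝ := (∫ x : E2, ‖g x‖ ^ 2) ^ ((1 : ℝ) / 2)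

/-! ### Van der Corput estimates for convex phases -/

/-- First derivative test. Convexity of the phase makes `1 / p1` monotone, which bounds the total
variation produced by integration by parts. -/
lemma vdc_first {p p1 p2 : ℝ → ℝ} {a b m : ℝ} (hab : a ≤ b) (hm : 0 < m)
    (h0 : ∀ x ∈ Set.Icc a b, HasDerivAt p (p1 x) x)
    (h1 : ∀ x ∈ Set.Icc a b, HasDerivAt p1 (p2 x) x)
    (hc : ContinuousOn p2 (Set.Icc a b))
    (h2 : ∀ x ∈ Set.Icc a b, 0 ≤ p2 x) (hl : ∀ x ∈ Set.Icc a b, m ≤ p1 x) :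
    ‖∫ x in a..b, Complex.exp (Complex.I * (p x : ℂ))‖ ≤ 3 / m := by
  have hpc : ContinuousOn p (Set.Icc a b) := fun x hx => (h0 x hx).continuousAt.continuousWithinAt
  have hp1c : ContinuousOn p1 (Set.Icc a b) := fun x hx => (h1 x hx).continuousAt.continuousWithinAt
  have hpos : ∀ x ∈ Set.Icc a b, 0 < p1 x := fun x hx => hm.trans_le (hl x hx)
  have hu : Set.uIcc a b = Set.Icc a b := Set.uIcc_of_le hab
  set e : ℝ → ℂ := fun x => Complex.exp (Complex.I * (p x : ℂ)) with he
  have hec : ContinuousOn e (Set.Icc a b) := by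
    apply Complex.continuous_exp.comp_continuousOn
    exact continuousOn_const.mul (Complex.continuous_ofReal.comp_continuousOn hpc)
  have hne : ∀ x, ‖e x‖ = 1 := fun x => by
    rw [he]; simp only; rw [mul_comm, Complex.norm_exp_ofReal_mul_I]
  have hqc : ContinuousOn (fun x => p2 x / (p1 x) ^ 2) (Set.Icc a b) :=
    hc.div (hp1c.pow 2) (fun x hx => by have := hpos x hx; positivity)
  have hq : ∫ x in a..b, p2 x / (p1 x) ^ 2 = (p1 a)⁻¹ - (p1 b)⁻¹ := by
    have := intervalIntegral.integral_eq_sub_of_hasDerivAt (a := a) (b := b)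
      (f := fun x => -(p1 x)⁻¹) (f' := fun x => p2 x / (p1 x) ^ 2) ?_ ?_
    · rw [this]; ring
    · intro x hx
      rw [hu] at hx
      exact (((h1 x hx).fun_inv (hpos x hx).ne').fun_neg).congr_deriv (by ring)
    · apply ContinuousOn.intervalIntegrable; rwa [hu]
  -- `F` is a primitive of the integrand up to a term controlled by the variation of `1 / p1`
  set F : ℝ → ℂ := fun x => e x * (((p1 x)⁻¹ : ℝ) : ℂ) * (-Complex.I) with hF
  have hFd : ∀ x ∈ Set.Icc a b, HasDerivAt F
      (e x + Complex.I * e x * ((p2 x / (p1 x) ^ 2 : ℝ) : ℂ)) x := by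
    intro x hx
    have hx0 := (hpos x hx).ne'
    have d1 : HasDerivAt e (e x * (Complex.I * (p1 x : ℂ))) x :=
      (((h0 x hx).ofReal_comp).const_mul Complex.I).cexp
    have d2 := ((h1 x hx).fun_inv hx0).ofReal_comp
    refine ((d1.fun_mul d2).mul_const (-Complex.I)).congr_deriv ?_
    have : (p1 x : ℂ) ≠ 0 := by exact_mod_cast hx0
    push_cast
    field_simp
    ring_nf
    simp only [Complex.I_sq]; ring
  have i1 : IntervalIntegrable e volume a b := by
    apply ContinuousOn.intervalIntegrable; rwa [hu]
  have hc2 : ContinuousOn (fun x => Complex.I * e x * ((p2 x / (p1 x) ^ 2 : ℝ) : ℂ)) (Set.Icc a b) :=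
    (continuousOn_const.mul hec).mul (Complex.continuous_ofReal.comp_continuousOn hqc)
  have i2 : IntervalIntegrable (fun x => Complex.I * e x * ((p2 x / (p1 x) ^ 2 : ℝ) : ℂ))
      volume a b := by
    apply ContinuousOn.intervalIntegrable; rwa [hu]
  have key := intervalIntegral.integral_eq_sub_of_hasDerivAt (a := a) (b := b)
      (f := F) (fun x hx => hFd x (hu ▸ hx)) (i1.add i2)
  rw [intervalIntegral.integral_add i1 i2] at key
  have hb2 : ‖∫ x in a..b, Complex.I * e x * ((p2 x / (p1 x) ^ 2 : ℝ) : ℂ)‖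
      ≤ (p1 a)⁻¹ - (p1 b)⁻¹ := by
    rw [← hq]
    apply intervalIntegral.norm_integral_le_of_norm_le hab
    · refine Filter.Eventually.of_forall fun x hx => ?_
      have hx' : x ∈ Set.Icc a b := Set.Ioc_subset_Icc_self hx
      have h2' := h2 x hx'
      have := hpos x hx'
      rw [norm_mul, norm_mul, hne, Complex.norm_I, Complex.norm_real, Real.norm_of_nonneg (by positivity)]
      simp
    · apply ContinuousOn.intervalIntegrable; rwa [hu]
  have hFn : ∀ x ∈ Set.Icc a b, ‖F x‖ ≤ 1 / m := by
    intro x hx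
    rw [hF]; simp only [norm_mul, hne, norm_neg, Complex.norm_I, Complex.norm_real]
    rw [Real.norm_of_nonneg (by have := hpos x hx; positivity), one_mul, mul_one, one_div]
    exact inv_anti₀ hm (hl x hx)
  have ha := Set.left_mem_Icc.2 hab
  have hb := Set.right_mem_Icc.2 hab
  have e1 : ∫ x in a..b, e x = F b - F a
      - ∫ x in a..b, Complex.I * e x * ((p2 x / (p1 x) ^ 2 : ℝ) : ℂ) := by
    rw [← key]; ring
  rw [e1]
  have t1 : (p1 a)⁻¹ ≤ 1 / m := by rw [one_div]; exact inv_anti₀ hm (hl a ha)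
  have t2 : 0 ≤ (p1 b)⁻¹ := (inv_pos.2 (hpos b hb)).le
  have t3 := norm_sub_le (F b - F a)
    (∫ x in a..b, Complex.I * e x * ((p2 x / (p1 x) ^ 2 : ℝ) : ℂ))
  have t4 := norm_sub_le (F b) (F a)
  have t5 := hFn a ha
  have t6 := hFn b hb
  have : 3 / m = 1 / m + 1 / m + 1 / m := by ring
  linarith

/-- Transport of the hypotheses of the derivative tests under `x ↦ -x`. -/
lemma vdc_reflect {p p1 : ℝ → ℝ} {a b : ℝ}
    (h0 : ∀ x ∈ Set.Icc a b, HasDerivAt p (p1 x) x) :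
    ∀ x ∈ Set.Icc (-b) (-a), HasDerivAt (fun y => p (-y)) (-p1 (-x)) x := by
  intro x hx
  have hx' : -x ∈ Set.Icc a b := ⟨by linarith [hx.2], by linarith [hx.1]⟩
  exact ((h0 (-x) hx').comp x (hasDerivAt_neg x)).congr_deriv (by ring)

lemma vdc_first_neg {p p1 p2 : ℝ → ℝ} {a b m : ℝ} (hab : a ≤ b) (hm : 0 < m)
    (h0 : ∀ x ∈ Set.Icc a b, HasDerivAt p (p1 x) x)
    (h1 : ∀ x ∈ Set.Icc a b, HasDerivAt p1 (p2 x) x)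
    (hc : ContinuousOn p2 (Set.Icc a b))
    (h2 : ∀ x ∈ Set.Icc a b, 0 ≤ p2 x) (hl : ∀ x ∈ Set.Icc a b, p1 x ≤ -m) :
    ‖∫ x in a..b, Complex.exp (Complex.I * (p x : ℂ))‖ ≤ 3 / m := by
  have hmem : ∀ x ∈ Set.Icc (-b) (-a), -x ∈ Set.Icc a b := fun x hx =>
    ⟨by linarith [hx.2], by linarith [hx.1]⟩
  have := vdc_first (p := fun y => p (-y)) (p1 := fun y => -p1 (-y)) (p2 := fun y => p2 (-y))
    (a := -b) (b := -a) (m := m) (by linarith) hm (vdc_reflect h0)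
    (fun x hx => (vdc_reflect h1 x hx).fun_neg.congr_deriv (by ring))
    (hc.comp continuous_neg.continuousOn hmem)
    (fun x hx => h2 _ (hmem x hx)) (fun x hx => by linarith [hl _ (hmem x hx)])
  rwa [intervalIntegral.integral_comp_neg (fun x => Complex.exp (Complex.I * (p x : ℂ))),
    neg_neg, neg_neg] at this

lemma norm_expI_integral_le (p : ℝ → ℝ) {a b : ℝ} (hab : a ≤ b) :
    ‖∫ x in a..b, Complex.exp (Complex.I * (p x : ℂ))‖ ≤ b - a := by
  have := intervalIntegral.norm_integral_le_of_norm_le_const (a := a) (b := b) (C := 1)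
    (f := fun x => Complex.exp (Complex.I * (p x : ℂ))) (fun x _ => by
      rw [mul_comm, Complex.norm_exp_ofReal_mul_I])
  rwa [one_mul, abs_of_nonneg (by linarith)] at this

lemma mono_of_deriv_ge {p1 p2 : ℝ → ℝ} {a b m : ℝ}
    (h1 : ∀ x ∈ Set.Icc a b, HasDerivAt p1 (p2 x) x)
    (h2 : ∀ x ∈ Set.Icc a b, m ≤ p2 x) {x y : ℝ} (hx : a ≤ x) (hxy : x ≤ y) (hy : y ≤ b) :
    m * (y - x) ≤ p1 y - p1 x := by
  have hI : Set.Icc x y ⊆ Set.Icc a b := Set.Icc_subset_Icc hx hy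
  exact Convex.mul_sub_le_image_sub_of_le_deriv (convex_Icc x y)
    (fun z hz => (h1 z (hI hz)).continuousAt.continuousWithinAt)
    (fun z hz => (h1 z (hI (interior_subset hz))).differentiableAt.differentiableWithinAt)
    (fun z hz => by rw [(h1 z (hI (interior_subset hz))).deriv]; exact h2 z (hI (interior_subset hz)))
    x (Set.left_mem_Icc.2 hxy) y (Set.right_mem_Icc.2 hxy) hxy

/-- Second derivative test on the side of the critical point where the phase increases. -/
lemma vdc_second_right {p p1 p2 : ℝ → ℝ} {a b m : ℝ} (hab : a ≤ b) (hm : 0 < m)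
    (h0 : ∀ x ∈ Set.Icc a b, HasDerivAt p (p1 x) x)
    (h1 : ∀ x ∈ Set.Icc a b, HasDerivAt p1 (p2 x) x)
    (hc : ContinuousOn p2 (Set.Icc a b))
    (h2 : ∀ x ∈ Set.Icc a b, m ≤ p2 x) (hl : 0 ≤ p1 a) :
    ‖∫ x in a..b, Complex.exp (Complex.I * (p x : ℂ))‖ ≤ 4 / √m := by
  have hs : 0 < √m := Real.sqrt_pos.2 hm
  have hss : √m * √m = m := Real.mul_self_sqrt hm.le
  have hk : 3 / √m + 1 / √m = 4 / √m := by ring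
  have hk0 : 0 < 1 / √m := by positivity
  have hk1 : 0 < 3 / √m := by positivity
  by_cases hq : a + 1 / √m ≤ b
  · have haq : a ≤ a + 1 / √m := by linarith
    have hI : Set.Icc (a + 1 / √m) b ⊆ Set.Icc a b := Set.Icc_subset_Icc haq le_rfl
    have hpc : ContinuousOn (fun x => Complex.exp (Complex.I * (p x : ℂ))) (Set.Icc a b) := by
      apply Complex.continuous_exp.comp_continuousOn
      exact continuousOn_const.mul (Complex.continuous_ofReal.comp_continuousOn
        (fun x hx => (h0 x hx).continuousAt.continuousWithinAt))
    rw [← intervalIntegral.integral_add_adjacent_intervals (b := a + 1 / √m)]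
    · refine (norm_add_le _ _).trans ?_
      have u1 := norm_expI_integral_le p haq
      have u2 := vdc_first (p := p) (p1 := p1) (p2 := p2) hq hs (fun x hx => h0 x (hI hx))
        (fun x hx => h1 x (hI hx)) (hc.mono hI) (fun x hx => hm.le.trans (h2 x (hI hx)))
        (fun x hx => by
          have := mono_of_deriv_ge h1 h2 le_rfl (haq.trans hx.1) hx.2
          have h3 : m * (1 / √m) ≤ m * (x - a) := by
            apply mul_le_mul_of_nonneg_left _ hm.le; linarith [hx.1]
          have h4 : m * (1 / √m) = √m := by
            nth_rewrite 1 [← hss]; field_simp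
          linarith)
      linarith
    · apply ContinuousOn.intervalIntegrable; rw [Set.uIcc_of_le haq]
      exact hpc.mono (Set.Icc_subset_Icc le_rfl hq)
    · apply ContinuousOn.intervalIntegrable; rw [Set.uIcc_of_le hq]
      exact hpc.mono hI
  · have := norm_expI_integral_le p hab
    push Not at hq
    linarith

lemma vdc_second_left {p p1 p2 : ℝ → ℝ} {a b m : ℝ} (hab : a ≤ b) (hm : 0 < m)
    (h0 : ∀ x ∈ Set.Icc a b, HasDerivAt p (p1 x) x)
    (h1 : ∀ x ∈ Set.Icc a b, HasDerivAt p1 (p2 x) x)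
    (hc : ContinuousOn p2 (Set.Icc a b))
    (h2 : ∀ x ∈ Set.Icc a b, m ≤ p2 x) (hl : p1 b ≤ 0) :
    ‖∫ x in a..b, Complex.exp (Complex.I * (p x : ℂ))‖ ≤ 4 / √m := by
  have hmem : ∀ x ∈ Set.Icc (-b) (-a), -x ∈ Set.Icc a b := fun x hx =>
    ⟨by linarith [hx.2], by linarith [hx.1]⟩
  have := vdc_second_right (p := fun y => p (-y)) (p1 := fun y => -p1 (-y)) (p2 := fun y => p2 (-y))
    (a := -b) (b := -a) (m := m) (by linarith) hm (vdc_reflect h0)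
    (fun x hx => (vdc_reflect h1 x hx).fun_neg.congr_deriv (by ring))
    (hc.comp continuous_neg.continuousOn hmem)
    (fun x hx => h2 _ (hmem x hx)) (by simpa using hl)
  rwa [intervalIntegral.integral_comp_neg (fun x => Complex.exp (Complex.I * (p x : ℂ))),
    neg_neg, neg_neg] at this

/-- Van der Corput's second derivative test: the critical point, if any, splits the interval
into two pieces on which the phase is monotone. -/
lemma vdc_second {p p1 p2 : ℝ → ℝ} {a b m : ℝ} (hab : a ≤ b) (hm : 0 < m)
    (h0 : ∀ x ∈ Set.Icc a b, HasDerivAt p (p1 x) x)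
    (h1 : ∀ x ∈ Set.Icc a b, HasDerivAt p1 (p2 x) x)
    (hc : ContinuousOn p2 (Set.Icc a b))
    (h2 : ∀ x ∈ Set.Icc a b, m ≤ p2 x) :
    ‖∫ x in a..b, Complex.exp (Complex.I * (p x : ℂ))‖ ≤ 8 / √m := by
  have hs : 0 < √m := Real.sqrt_pos.2 hm
  have hk : 4 / √m + 4 / √m = 8 / √m := by ring
  have hk0 : 0 < 4 / √m := by positivity
  rcases le_or_gt 0 (p1 a) with ha | ha
  · linarith [vdc_second_right hab hm h0 h1 hc h2 ha]
  rcases le_or_gt (p1 b) 0 with hb | hb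
  · linarith [vdc_second_left hab hm h0 h1 hc h2 hb]
  obtain ⟨z, hz, hz0⟩ : (0 : ℝ) ∈ p1 '' Set.Icc a b :=
    intermediate_value_Icc hab (fun x hx => (h1 x hx).continuousAt.continuousWithinAt)
      ⟨ha.le, hb.le⟩
  have hI1 : Set.Icc a z ⊆ Set.Icc a b := Set.Icc_subset_Icc le_rfl hz.2
  have hI2 : Set.Icc z b ⊆ Set.Icc a b := Set.Icc_subset_Icc hz.1 le_rfl
  have hpc : ContinuousOn (fun x => Complex.exp (Complex.I * (p x : ℂ))) (Set.Icc a b) := by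
    apply Complex.continuous_exp.comp_continuousOn
    exact continuousOn_const.mul (Complex.continuous_ofReal.comp_continuousOn
      (fun x hx => (h0 x hx).continuousAt.continuousWithinAt))
  rw [← intervalIntegral.integral_add_adjacent_intervals (b := z)]
  · refine (norm_add_le _ _).trans ?_
    have u1 := vdc_second_left hz.1 hm (fun x hx => h0 x (hI1 hx)) (fun x hx => h1 x (hI1 hx))
      (hc.mono hI1) (fun x hx => h2 x (hI1 hx)) hz0.le
    have u2 := vdc_second_right hz.2 hm (fun x hx => h0 x (hI2 hx)) (fun x hx => h1 x (hI2 hx))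
      (hc.mono hI2) (fun x hx => h2 x (hI2 hx)) hz0.ge
    linarith
  · apply ContinuousOn.intervalIntegrable; rw [Set.uIcc_of_le hz.1]; exact hpc.mono hI1
  · apply ContinuousOn.intervalIntegrable; rw [Set.uIcc_of_le hz.2]; exact hpc.mono hI2

/-! ### Radial oscillatory integrals -/

/-- The radial oscillation `e^{i(cσ - t√σ)}` along a fixed ray, `c` being the component of
the position in the direction of the ray. -/
def osc (c t σ : ℝ) : ℂ := Complex.exp (Complex.I * ((c * σ - t * √σ : ℝ) : ℂ))

/-- Truncated radial oscillatory integral. -/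
def oscV (c t s : ℝ) : ℂ := ∫ σ in (1 : ℝ)..s, osc c t σ

/-- Truncated radial oscillatory integral with the polar weight `σ`. -/
def oscW (c t s : ℝ) : ℂ := ∫ σ in (1 : ℝ)..s, osc c t σ * (σ : ℂ)

lemma norm_osc (c t σ : ℝ) : ‖osc c t σ‖ = 1 := by
  rw [osc, mul_comm, Complex.norm_exp_ofReal_mul_I]

lemma continuous_osc (t : ℝ) : Continuous fun q : ℝ × ℝ => osc q.1 t q.2 := by
  unfold osc
  fun_prop

lemma continuous_osc_right (c t : ℝ) : Continuous fun σ => osc c t σ :=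
  (continuous_osc t).comp (continuous_const.prodMk continuous_id)

lemma osc_neg (c t σ : ℝ) : osc (-c) (-t) σ = (starRingEnd ℂ) (osc c t σ) := by
  unfold osc
  rw [← Complex.exp_conj]
  congr 1
  rw [map_mul, Complex.conj_I, Complex.conj_ofReal]
  push_cast
  ring

lemma norm_oscV_neg (c t s : ℝ) : ‖oscV (-c) (-t) s‖ = ‖oscV c t s‖ := by
  unfold oscV
  simp_rw [osc_neg, intervalIntegral.intervalIntegral_eq_integral_uIoc]
  rw [integral_conj, norm_smul, norm_smul, RCLike.norm_conj]

lemma phase_hasDerivAt (c t : ℝ) {x : ℝ} (hx : 0 < x) :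
    HasDerivAt (fun σ => c * σ - t * √σ) (c - t / (2 * √x)) x := by
  refine (((hasDerivAt_id x).const_mul c).sub
    ((Real.hasDerivAt_sqrt hx.ne').const_mul t)).congr_deriv ?_
  ring

lemma phase_hasDerivAt2 (c t : ℝ) {x : ℝ} (hx : 0 < x) :
    HasDerivAt (fun σ => c - t / (2 * √σ)) (t / (4 * (x * √x))) x := by
  have hs : 0 < √x := Real.sqrt_pos.2 hx
  have h1 := ((Real.hasDerivAt_sqrt hx.ne').const_mul 2).fun_inv (by positivity)
  refine (((h1.const_mul t).const_sub c).congr_deriv ?_)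
  have : x = √x * √x := (Real.mul_self_sqrt hx.le).symm
  field_simp
  rw [Real.sq_sqrt hx.le]
  ring

lemma phase_cont2 (t : ℝ) {s : ℝ} :
    ContinuousOn (fun x => t / (4 * (x * √x))) (Set.Icc 1 s) := by
  apply ContinuousOn.div continuousOn_const (by fun_prop)
  intro x hx
  have : 0 < x := by linarith [hx.1]
  have := Real.sqrt_pos.2 this
  positivity

lemma norm_oscV_le_of_pos {c t s : ℝ} (ht : 0 < t) (h1 : 1 ≤ s) (h4 : s ≤ 4) :
    ‖oscV c t s‖ ≤ 48 / √t := by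
  have hpos : ∀ x ∈ Set.Icc (1 : ℝ) s, 0 < x := fun x hx => by linarith [hx.1]
  have := vdc_second (m := t / 36) h1 (by positivity)
    (fun x hx => phase_hasDerivAt c t (hpos x hx))
    (fun x hx => phase_hasDerivAt2 c t (hpos x hx)) (phase_cont2 t)
    (fun x hx => by
      have h0 := hpos x hx
      have hx4 : x ≤ 4 := hx.2.trans h4
      have hs2 : √x ≤ 2 := by
        rw [show (2 : ℝ) = √4 by rw [show (4 : ℝ) = 2 ^ 2 by norm_num, Real.sqrt_sq (by norm_num)]]
        exact Real.sqrt_le_sqrt hx4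
      have hs0 := Real.sqrt_pos.2 h0
      apply div_le_div_of_nonneg_left ht.le (by positivity)
      nlinarith)
  have h36 : √(t / 36) = √t / 6 := by
    rw [Real.sqrt_div ht.le, show (36 : ℝ) = 6 ^ 2 by norm_num, Real.sqrt_sq (by norm_num)]
  rw [h36] at this
  refine this.trans (le_of_eq ?_)
  have := Real.sqrt_pos.2 ht
  field_simp
  norm_num

/-- Second derivative test, uniform in the linear part `c` of the phase. -/
lemma norm_oscV_le {c t s : ℝ} (ht : t ≠ 0) (h1 : 1 ≤ s) (h4 : s ≤ 4) :
    ‖oscV c t s‖ ≤ 48 / √|t| := by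
  rcases lt_or_gt_of_ne ht with h | h
  · rw [← norm_oscV_neg, abs_of_neg h]
    exact norm_oscV_le_of_pos (by linarith) h1 h4
  · rw [abs_of_pos h]
    exact norm_oscV_le_of_pos h h1 h4

lemma norm_oscV_le_nonstat_of_pos {c t s : ℝ} (ht : 0 < t) (hc : c ≤ t / 8)
    (h1 : 1 ≤ s) (h4 : s ≤ 4) : ‖oscV c t s‖ ≤ 24 / t := by
  have hpos : ∀ x ∈ Set.Icc (1 : ℝ) s, 0 < x := fun x hx => by linarith [hx.1]
  have := vdc_first_neg (m := t / 8) h1 (by positivity)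
    (fun x hx => phase_hasDerivAt c t (hpos x hx))
    (fun x hx => phase_hasDerivAt2 c t (hpos x hx)) (phase_cont2 t)
    (fun x hx => by have := hpos x hx; positivity)
    (fun x hx => by
      have h0 := hpos x hx
      have hx4 : x ≤ 4 := hx.2.trans h4
      have hs2 : √x ≤ 2 := by
        rw [show (2 : ℝ) = √4 by rw [show (4 : ℝ) = 2 ^ 2 by norm_num, Real.sqrt_sq (by norm_num)]]
        exact Real.sqrt_le_sqrt hx4
      have hs0 := Real.sqrt_pos.2 h0
      have : t / 4 ≤ t / (2 * √x) := by
        apply div_le_div_of_nonneg_left ht.le (by positivity)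
        linarith
      linarith)
  refine this.trans (le_of_eq ?_)
  field_simp
  norm_num

/-- First derivative test: for `|c| ≤ |t| / 8` the phase `cσ - t√σ` has no critical point on
`[1, 4]`. -/
lemma norm_oscV_le_nonstat {c t s : ℝ} (ht : t ≠ 0) (hc : |c| ≤ |t| / 8)
    (h1 : 1 ≤ s) (h4 : s ≤ 4) : ‖oscV c t s‖ ≤ 24 / |t| := by
  have hc' := abs_le.1 hc
  rcases lt_or_gt_of_ne ht with h | h
  · rw [abs_of_neg h] at hc' ⊢
    rw [← norm_oscV_neg]
    exact norm_oscV_le_nonstat_of_pos (by linarith) (by linarith) h1 h4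
  · rw [abs_of_pos h] at hc' ⊢
    exact norm_oscV_le_nonstat_of_pos h hc'.2 h1 h4

lemma oscV_hasDerivAt (c t s : ℝ) : HasDerivAt (oscV c t) (osc c t s) s :=
  (continuous_osc_right c t).integral_hasStrictDerivAt 1 s |>.hasDerivAt

lemma oscW_hasDerivAt (c t s : ℝ) : HasDerivAt (oscW c t) (osc c t s * (s : ℂ)) s :=
  ((continuous_osc_right c t).mul Complex.continuous_ofReal).integral_hasStrictDerivAt 1 s
    |>.hasDerivAt

lemma continuous_oscV (t : ℝ) : Continuous fun q : ℝ × ℝ => oscV q.1 t q.2 := by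
  unfold oscV
  refine intervalIntegral.continuous_parametric_intervalIntegral_of_continuous
    (f := fun (q : ℝ × ℝ) σ => osc q.1 t σ) ?_ continuous_snd
  exact (continuous_osc t).comp (by fun_prop : Continuous fun p : (ℝ × ℝ) × ℝ => (p.1.1, p.2))

lemma continuous_oscW (t : ℝ) : Continuous fun q : ℝ × ℝ => oscW q.1 t q.2 := by
  unfold oscW
  refine intervalIntegral.continuous_parametric_intervalIntegral_of_continuous
    (f := fun (q : ℝ × ℝ) σ => osc q.1 t σ * (σ : ℂ)) ?_ continuous_snd
  exact ((continuous_osc t).comp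
    (by fun_prop : Continuous fun p : (ℝ × ℝ) × ℝ => (p.1.1, p.2))).mul (by fun_prop)

/-- Integration by parts removes the weight: `W(s) = s V(s) - ∫₁ˢ V`. -/
lemma oscW_eq (c t s : ℝ) : oscW c t s = s * oscV c t s - ∫ σ in (1 : ℝ)..s, oscV c t σ := by
  have hVc : Continuous (oscV c t) :=
    continuous_iff_continuousAt.2 fun x => (oscV_hasDerivAt c t x).continuousAt
  have h := intervalIntegral.integral_eq_sub_of_hasDerivAt (a := 1) (b := s)
    (f := fun σ : ℝ => oscV c t σ * (σ : ℂ)) (f' := fun σ => osc c t σ * (σ : ℂ) + oscV c t σ)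
    (fun x _ => ((oscV_hasDerivAt c t x).fun_mul (hasDerivAt_id x).ofReal_comp).congr_deriv
      (by simp))
    ((((continuous_osc_right c t).mul Complex.continuous_ofReal).add hVc).intervalIntegrable _ _)
  rw [intervalIntegral.integral_add
    (((continuous_osc_right c t).fun_mul Complex.continuous_ofReal).intervalIntegrable _ _)
    (hVc.intervalIntegrable _ _)] at h
  have h1 : oscV c t 1 = 0 := by simp [oscV]
  rw [h1] at h
  unfold oscW
  linear_combination h

lemma norm_oscW_le_of {c t s M : ℝ} (h1 : 1 ≤ s) (h4 : s ≤ 4)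
    (hM : ∀ x, 1 ≤ x → x ≤ 4 → ‖oscV c t x‖ ≤ M) : ‖oscW c t s‖ ≤ 7 * M := by
  rw [oscW_eq]
  have a1 := intervalIntegral.norm_integral_le_of_norm_le_const (a := 1) (b := s) (C := M)
    (f := fun σ => oscV c t σ) (fun x hx => by
      rw [Set.uIoc_of_le h1] at hx
      exact hM x hx.1.le (hx.2.trans h4))
  have hM0 : 0 ≤ M := (norm_nonneg _).trans (hM s h1 h4)
  rw [abs_of_nonneg (by linarith)] at a1
  have a2 : ‖(s : ℂ) * oscV c t s‖ ≤ 4 * M := by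
    rw [norm_mul, Complex.norm_real, Real.norm_of_nonneg (by linarith)]
    exact mul_le_mul h4 (hM s h1 h4) (norm_nonneg _) (by norm_num)
  have a3 := norm_sub_le ((s : ℂ) * oscV c t s) (∫ σ in (1 : ℝ)..s, oscV c t σ)
  nlinarith

lemma norm_oscW_le {c t s : ℝ} (ht : t ≠ 0) (h1 : 1 ≤ s) (h4 : s ≤ 4) :
    ‖oscW c t s‖ ≤ 7 * (48 / √|t|) :=
  norm_oscW_le_of h1 h4 fun _ => norm_oscV_le ht

lemma norm_oscW_le_nonstat {c t s : ℝ} (ht : t ≠ 0) (hc : |c| ≤ |t| / 8)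
    (h1 : 1 ≤ s) (h4 : s ≤ 4) : ‖oscW c t s‖ ≤ 7 * (24 / |t|) :=
  norm_oscW_le_of h1 h4 fun _ => norm_oscV_le_nonstat ht hc

lemma norm_oscW_le_triv {c t s : ℝ} (h1 : 1 ≤ s) (h4 : s ≤ 4) : ‖oscW c t s‖ ≤ 7 * 3 :=
  norm_oscW_le_of h1 h4 fun x hx1 hx4 => by
    have := norm_expI_integral_le (fun σ => c * σ - t * √σ) hx1
    unfold oscV osc
    linarith

lemma oscV_hasDerivAt_param (c t s : ℝ) :
    HasDerivAt (fun c => oscV c t s) (Complex.I * oscW c t s) c := by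
  have := intervalIntegral.hasDerivAt_integral_of_dominated_loc_of_deriv_le (𝕜 := ℝ)
    (μ := volume) (a := 1) (b := s)
    (F := fun c σ => osc c t σ) (F' := fun c σ => Complex.I * (osc c t σ * (σ : ℂ)))
    (x₀ := c) (s := Set.univ) (bound := fun σ => |σ|) Filter.univ_mem
    (Filter.Eventually.of_forall fun c => (continuous_osc_right c t).aestronglyMeasurable)
    ((continuous_osc_right c t).intervalIntegrable _ _)
    (((continuous_osc_right c t).mul Complex.continuous_ofReal).const_mul _).aestronglyMeasurable
    (Filter.Eventually.of_forall fun σ _ c _ => by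
      rw [norm_mul, norm_mul, norm_osc, Complex.norm_real, Complex.norm_I, one_mul, one_mul,
        Real.norm_eq_abs])
    (continuous_abs.intervalIntegrable _ _)
    (Filter.Eventually.of_forall fun σ _ c _ => by
      have h : HasDerivAt (fun c : ℝ => c * σ - t * √σ) σ c :=
        (((hasDerivAt_id c).mul_const σ).sub_const _).congr_deriv (by simp)
      refine (h.ofReal_comp.const_mul Complex.I).cexp.congr_deriv ?_
      unfold osc
      ring)
  have h2 := this.2
  rw [intervalIntegral.integral_const_mul] at h2
  exact h2

lemma oscV_hasDerivAt_angle (r t s θ : ℝ) :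
    HasDerivAt (fun θ => oscV (r * Real.cos θ) t s)
      (-(Complex.I * r * Real.sin θ) * oscW (r * Real.cos θ) t s) θ := by
  have h := (oscV_hasDerivAt_param (r * Real.cos θ) t s).scomp θ
    ((Real.hasDerivAt_cos θ).const_mul r)
  refine h.congr_deriv ?_
  rw [Complex.real_smul]
  push_cast
  ring

/-! ### Angular integration -/

/-- One-dimensional Sobolev embedding on a quarter period. -/
lemma sup_le_quarter {G G1 : ℝ → ℂ} (hG : ∀ x, HasDerivAt G (G1 x) x) (hG1 : Continuous G1)
    {x : ℝ} (hx : x ∈ Set.Icc 0 (Real.pi / 2)) :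
    ‖G x‖ ≤ ∫ y in (0 : ℝ)..(Real.pi / 2), (‖G y‖ + ‖G1 y‖) := by
  have hpi := Real.pi_gt_three
  have hGc : Continuous G := continuous_iff_continuousAt.2 fun x => (hG x).continuousAt
  have hle : (0 : ℝ) ≤ Real.pi / 2 := by positivity
  set J := ∫ y in (0 : ℝ)..(Real.pi / 2), ‖G1 y‖ with hJ
  have hpt : ∀ y ∈ Set.Icc 0 (Real.pi / 2), ‖G x‖ ≤ ‖G y‖ + J := by
    intro y hy
    have e1 : ∫ z in y..x, G1 z = G x - G y :=
      intervalIntegral.integral_eq_sub_of_hasDerivAt (fun z _ => hG z)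
        (hG1.intervalIntegrable _ _)
    have e2 : ‖∫ z in y..x, G1 z‖ ≤ J := by
      refine intervalIntegral.norm_integral_le_integral_norm_uIoc.trans ?_
      rw [hJ, intervalIntegral.integral_of_le hle]
      apply setIntegral_mono_set
      · exact hG1.norm.integrableOn_Ioc
      · exact Filter.Eventually.of_forall fun _ => norm_nonneg _
      · apply LE.le.eventuallyLE
        intro z hz
        rcases le_total y x with h | h
        · rw [Set.uIoc_of_le h] at hz
          exact ⟨hy.1.trans_lt hz.1, hz.2.trans hx.2⟩
        · rw [Set.uIoc_of_ge h] at hz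
          exact ⟨hx.1.trans_lt hz.1, hz.2.trans hy.2⟩
    rw [e1] at e2
    have := norm_sub_norm_le (G x) (G y)
    linarith
  have h1 : ∫ y in (0 : ℝ)..(Real.pi / 2), ‖G x‖ ≤ ∫ y in (0 : ℝ)..(Real.pi / 2), (‖G y‖ + J) :=
    intervalIntegral.integral_mono_on hle (by simp)
      ((hGc.norm.add continuous_const).intervalIntegrable _ _) hpt
  rw [intervalIntegral.integral_add (hGc.norm.intervalIntegrable _ _) (by simp)] at h1
  rw [intervalIntegral.integral_add (hGc.norm.intervalIntegrable _ _)
    (hG1.norm.intervalIntegrable _ _)]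
  simp only [intervalIntegral.integral_const, smul_eq_mul, sub_zero] at h1
  have h0 : 0 ≤ ∫ y in (0 : ℝ)..(Real.pi / 2), ‖G y‖ :=
    intervalIntegral.integral_nonneg hle fun _ _ => norm_nonneg _
  have h3 : Real.pi / 2 * (‖G x‖ - J) ≤ ∫ y in (0 : ℝ)..(Real.pi / 2), ‖G y‖ := by
    linarith
  have h4 : ‖G x‖ - J ≤ ∫ y in (0 : ℝ)..(Real.pi / 2), ‖G y‖ := by
    by_cases h : 0 ≤ ‖G x‖ - J
    · nlinarith
    · linarith
  linarith

lemma half_le_sin {x : ℝ} (h0 : 0 ≤ x) (h1 : x ≤ Real.pi / 2) : x / 2 ≤ Real.sin x := by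
  refine le_trans ?_ (Real.mul_le_sin h0 h1)
  have := Real.pi_lt_four
  have : (1 : ℝ) / 2 ≤ 2 / Real.pi := by
    rw [div_le_div_iff₀ (by norm_num) Real.pi_pos]; linarith
  nlinarith

/-- Integration by parts in the angle away from the direction `θ = 0`, using that
`oscV` is an angular primitive of `sin θ • oscW` up to a constant factor.
Here `M` bounds `oscV`, and `N` bounds both the supremum of `G` and the `L¹` norm of its derivative `G1`. -/
lemma quarter_away {G G1 : ℝ → ℂ} (hG : ∀ x, HasDerivAt G (G1 x) x) (hG1 : Continuous G1)
    {r t s d M N : ℝ} (hr : r ≠ 0) (hd : 0 < d) (hd1 : d ≤ Real.pi / 2)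
    (hM : ∀ c, ‖oscV c t s‖ ≤ M)
    (hN : ∀ x ∈ Set.Icc 0 (Real.pi / 2), ‖G x‖ ≤ N)
    (hN1 : ∫ y in (0 : ℝ)..(Real.pi / 2), ‖G1 y‖ ≤ N) :
    ‖∫ θ in d..(Real.pi / 2), oscW (r * Real.cos θ) t s * G θ‖ ≤ |r|⁻¹ * (M * (10 * (N / d))) := by
  have hGc : Continuous G := continuous_iff_continuousAt.2 fun x => (hG x).continuousAt
  have hu : Set.uIcc d (Real.pi / 2) = Set.Icc d (Real.pi / 2) := Set.uIcc_of_le hd1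
  have hsub : Set.Icc d (Real.pi / 2) ⊆ Set.Icc 0 (Real.pi / 2) :=
    Set.Icc_subset_Icc hd.le le_rfl
  have hsin : ∀ x ∈ Set.Icc d (Real.pi / 2), x / 2 ≤ Real.sin x := fun x hx =>
    half_le_sin (hsub hx).1 hx.2
  have hx0 : ∀ x ∈ Set.Icc d (Real.pi / 2), 0 < x := fun x hx => hd.trans_le hx.1
  have hsin0 : ∀ x ∈ Set.Icc d (Real.pi / 2), 0 < Real.sin x := fun x hx => by
    linarith [hsin x hx, hx0 x hx]
  have hN0 : 0 ≤ N := (norm_nonneg _).trans (hN 0 ⟨le_rfl, by linarith⟩)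
  have hM0 : 0 ≤ M := (norm_nonneg _).trans (hM 0)
  set F : ℝ → ℂ := fun x => G x * (((Real.sin x)⁻¹ : ℝ) : ℂ) with hF
  set F1 : ℝ → ℂ := fun x => G1 x * (((Real.sin x)⁻¹ : ℝ) : ℂ)
    + G x * ((-Real.cos x / Real.sin x ^ 2 : ℝ) : ℂ) with hF1
  have hFd : ∀ x ∈ Set.uIcc d (Real.pi / 2), HasDerivAt F (F1 x) x := fun x hx => by
    rw [hu] at hx
    exact (hG x).fun_mul ((Real.hasDerivAt_sin x).fun_inv (hsin0 x hx).ne').ofReal_comp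
  have hinvc : ContinuousOn (fun x => (Real.sin x)⁻¹) (Set.Icc d (Real.pi / 2)) :=
    Real.continuous_sin.continuousOn.inv₀ fun x hx => (hsin0 x hx).ne'
  have hF1c : ContinuousOn F1 (Set.Icc d (Real.pi / 2)) := by
    apply ContinuousOn.add
    · exact hG1.continuousOn.mul (Complex.continuous_ofReal.comp_continuousOn hinvc)
    · refine hGc.continuousOn.mul (Complex.continuous_ofReal.comp_continuousOn ?_)
      apply ContinuousOn.div (by fun_prop) (by fun_prop)
      intro x hx
      have := hsin0 x hx
      positivity
  set V : ℝ → ℂ := fun θ => oscV (r * Real.cos θ) t s with hV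
  have hVd := fun θ => oscV_hasDerivAt_angle r t s θ
  have hVc : Continuous V := continuous_iff_continuousAt.2 fun x => (hVd x).continuousAt
  have hWc : Continuous fun θ => oscW (r * Real.cos θ) t s :=
    (continuous_oscW t).comp (by fun_prop : Continuous fun θ : ℝ => (r * Real.cos θ, s))
  have ibp := intervalIntegral.integral_mul_deriv_eq_deriv_mul (a := d) (b := Real.pi / 2)
    (u := F) (v := V) hFd (fun x _ => hVd x)
    (by apply ContinuousOn.intervalIntegrable; rwa [hu])
    ((by fun_prop : Continuous fun θ : ℝ => -(Complex.I * (r : ℂ) * (Real.sin θ : ℂ)) *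
      oscW (r * Real.cos θ) t s).intervalIntegrable _ _)
  have hrC : (r : ℂ) ≠ 0 := by exact_mod_cast hr
  have e1 : ∫ θ in d..(Real.pi / 2), oscW (r * Real.cos θ) t s * G θ
      = (Complex.I * (r : ℂ)⁻¹) * ∫ θ in d..(Real.pi / 2),
        F θ * (-(Complex.I * (r : ℂ) * (Real.sin θ : ℂ)) * oscW (r * Real.cos θ) t s) := by
    rw [← intervalIntegral.integral_const_mul]
    apply intervalIntegral.integral_congr
    intro x hx
    rw [hu] at hx
    have h1 : (Real.sin x : ℂ) ≠ 0 := by exact_mod_cast (hsin0 x hx).ne'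
    simp only [hF]
    push_cast at h1 ⊢
    field_simp
    rw [Complex.I_sq]; ring
  rw [e1, ibp, norm_mul, norm_mul, Complex.norm_I, one_mul, norm_inv, Complex.norm_real,
    Real.norm_eq_abs]
  apply mul_le_mul_of_nonneg_left _ (by positivity)
  have hinv : ∀ x ∈ Set.Icc d (Real.pi / 2), (Real.sin x)⁻¹ ≤ 2 / x := fun x hx => by
    rw [← inv_div]
    exact inv_anti₀ (by linarith [hx0 x hx]) (hsin x hx)
  have hinvd : ∀ x ∈ Set.Icc d (Real.pi / 2), (Real.sin x)⁻¹ ≤ 2 / d := fun x hx =>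
    (hinv x hx).trans (div_le_div_of_nonneg_left (by norm_num) hd hx.1)
  have hFb : ∀ x ∈ Set.Icc d (Real.pi / 2), ‖F x‖ ≤ 2 * (N / d) := fun x hx => by
    simp only [hF, norm_mul, Complex.norm_real]
    rw [Real.norm_of_nonneg (inv_pos.2 (hsin0 x hx)).le]
    calc ‖G x‖ * (Real.sin x)⁻¹ ≤ N * (2 / d) :=
          mul_le_mul (hN x (hsub hx)) (hinvd x hx) (inv_pos.2 (hsin0 x hx)).le hN0
      _ = 2 * (N / d) := by ring
  have hF1b : ∀ x ∈ Set.Icc d (Real.pi / 2), ‖F1 x * V x‖ ≤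
      M * (2 / d * ‖G1 x‖ + 4 * N * (1 / x ^ 2)) := fun x hx => by
    have hxx := hx0 x hx
    have hsx := hsin0 x hx
    rw [norm_mul, mul_comm]
    apply mul_le_mul (hM _) _ (norm_nonneg _) hM0
    refine (norm_add_le _ _).trans (add_le_add ?_ ?_)
    · rw [norm_mul, Complex.norm_real, Real.norm_of_nonneg (inv_pos.2 hsx).le, mul_comm]
      exact mul_le_mul_of_nonneg_right (hinvd x hx) (norm_nonneg _)
    · rw [norm_mul, Complex.norm_real, norm_div, norm_neg, norm_pow, Real.norm_eq_abs,
        Real.norm_of_nonneg hsx.le]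
      have c1 : |Real.cos x| / Real.sin x ^ 2 ≤ 4 * (1 / x ^ 2) := by
        calc |Real.cos x| / Real.sin x ^ 2 ≤ 1 / Real.sin x ^ 2 :=
              div_le_div_of_nonneg_right (Real.abs_cos_le_one x) (by positivity)
          _ = ((Real.sin x)⁻¹) ^ 2 := by rw [inv_pow, one_div]
          _ ≤ (2 / x) ^ 2 := pow_le_pow_left₀ (inv_pos.2 hsx).le (hinv x hx) 2
          _ = 4 * (1 / x ^ 2) := by ring
      calc ‖G x‖ * (|Real.cos x| / Real.sin x ^ 2) ≤ N * (4 * (1 / x ^ 2)) :=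
            mul_le_mul (hN x (hsub hx)) c1 (by positivity) hN0
        _ = 4 * N * (1 / x ^ 2) := by ring
  have hsqc : ContinuousOn (fun x : ℝ => 1 / x ^ 2) (Set.Icc d (Real.pi / 2)) :=
    ContinuousOn.div (by fun_prop) (by fun_prop) fun x hx => by
      have := hx0 x hx
      positivity
  have hsqi : ∫ x in d..(Real.pi / 2), 1 / x ^ 2 ≤ 1 / d := by
    have := intervalIntegral.integral_eq_sub_of_hasDerivAt (a := d) (b := Real.pi / 2)
      (f := fun x : ℝ => -x⁻¹) (f' := fun x => 1 / x ^ 2) (fun x hx => by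
        rw [hu] at hx
        exact (hasDerivAt_inv (hx0 x hx).ne').fun_neg.congr_deriv (by ring))
      (by apply ContinuousOn.intervalIntegrable; rwa [hu])
    rw [this, one_div]
    have : (0 : ℝ) < (Real.pi / 2)⁻¹ := by positivity
    linarith
  have hG1d : ∫ x in d..(Real.pi / 2), ‖G1 x‖ ≤ N := by
    refine le_trans ?_ hN1
    rw [intervalIntegral.integral_of_le hd1, intervalIntegral.integral_of_le (by positivity)]
    exact setIntegral_mono_set hG1.norm.integrableOn_Ioc
      (Filter.Eventually.of_forall fun _ => norm_nonneg _)
      (LE.le.eventuallyLE (Set.Ioc_subset_Ioc hd.le le_rfl))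
  have j1 : IntervalIntegrable (fun x => 2 / d * ‖G1 x‖) volume d (Real.pi / 2) :=
    (continuous_const.mul hG1.norm).intervalIntegrable _ _
  have j2 : IntervalIntegrable (fun x : ℝ => 4 * N * (1 / x ^ 2)) volume d (Real.pi / 2) := by
    apply ContinuousOn.intervalIntegrable; rw [hu]; exact continuousOn_const.mul hsqc
  have hint : ‖∫ x in d..(Real.pi / 2), F1 x * V x‖ ≤ M * (6 * (N / d)) := by
    refine (intervalIntegral.norm_integral_le_of_norm_le hd1
      (Filter.Eventually.of_forall fun x hx => hF1b x (Set.Ioc_subset_Icc_self hx))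
      ((j1.add j2).const_mul M)).trans ?_
    rw [intervalIntegral.integral_const_mul, intervalIntegral.integral_add j1 j2,
      intervalIntegral.integral_const_mul, intervalIntegral.integral_const_mul]
    apply mul_le_mul_of_nonneg_left _ hM0
    have b1 : 2 / d * ∫ x in d..(Real.pi / 2), ‖G1 x‖ ≤ 2 / d * N :=
      mul_le_mul_of_nonneg_left hG1d (by positivity)
    have b2 : 4 * N * ∫ x in d..(Real.pi / 2), 1 / x ^ 2 ≤ 4 * N * (1 / d) :=
      mul_le_mul_of_nonneg_left hsqi (by positivity)
    calc _ ≤ 2 / d * N + 4 * N * (1 / d) := add_le_add b1 b2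
      _ = 6 * (N / d) := by ring
  have hbd : ∀ x ∈ Set.Icc d (Real.pi / 2), ‖F x * V x‖ ≤ M * (2 * (N / d)) := fun x hx => by
    rw [norm_mul, mul_comm]
    exact mul_le_mul (hM _) (hFb x hx) (norm_nonneg _) hM0
  have q1 := hbd d (Set.left_mem_Icc.2 hd1)
  have q2 := hbd (Real.pi / 2) (Set.right_mem_Icc.2 hd1)
  have q3 := norm_sub_le (F (Real.pi / 2) * V (Real.pi / 2) - F d * V d)
    (∫ x in d..(Real.pi / 2), F1 x * V x)
  have q4 := norm_sub_le (F (Real.pi / 2) * V (Real.pi / 2)) (F d * V d)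
  linarith

/-- The angular integral of the truncated radial integral decays like `|t|⁻¹`. For
`|r| ≤ |t| / 8` the radial phase has no critical point; otherwise the second derivative test gives
`|t|^{-1/2}` at every angle, and the angular oscillation gives the missing `|t|^{-1/2}`. -/
lemma quarter_bound {G G1 : ℝ → ℂ} (hG : ∀ x, HasDerivAt G (G1 x) x) (hG1 : Continuous G1)
    {r t s : ℝ} (ht : t ≠ 0) (h1 : 1 ≤ s) (h4 : s ≤ 4) :
    ‖∫ θ in (0 : ℝ)..(Real.pi / 2), oscW (r * Real.cos θ) t s * G θ‖ ≤
      5000 * |t|⁻¹ * ∫ y in (0 : ℝ)..(Real.pi / 2), (‖G y‖ + ‖G1 y‖) := by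
  have hpi := Real.pi_gt_three
  have hGc : Continuous G := continuous_iff_continuousAt.2 fun x => (hG x).continuousAt
  have hle : (0 : ℝ) ≤ Real.pi / 2 := by positivity
  set N := ∫ y in (0 : ℝ)..(Real.pi / 2), (‖G y‖ + ‖G1 y‖) with hN
  have hNsup : ∀ x ∈ Set.Icc 0 (Real.pi / 2), ‖G x‖ ≤ N := fun x hx => sup_le_quarter hG hG1 hx
  have hN0 : 0 ≤ N := (norm_nonneg _).trans (hNsup 0 ⟨le_rfl, hle⟩)
  have hsplit : N = (∫ y in (0 : ℝ)..(Real.pi / 2), ‖G y‖) +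
      ∫ y in (0 : ℝ)..(Real.pi / 2), ‖G1 y‖ :=
    intervalIntegral.integral_add (hGc.norm.intervalIntegrable _ _)
      (hG1.norm.intervalIntegrable _ _)
  have hA0 : 0 ≤ ∫ y in (0 : ℝ)..(Real.pi / 2), ‖G y‖ :=
    intervalIntegral.integral_nonneg hle fun _ _ => norm_nonneg _
  have hB0 : 0 ≤ ∫ y in (0 : ℝ)..(Real.pi / 2), ‖G1 y‖ :=
    intervalIntegral.integral_nonneg hle fun _ _ => norm_nonneg _
  have hta : 0 < |t| := abs_pos.2 ht
  have hti : 0 < |t|⁻¹ := inv_pos.2 hta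
  have hWc : Continuous fun θ => oscW (r * Real.cos θ) t s :=
    (continuous_oscW t).comp (by fun_prop : Continuous fun θ : ℝ => (r * Real.cos θ, s))
  -- a uniform bound on the radial integral suffices in the first two cases
  have simple : ∀ K, (∀ θ, ‖oscW (r * Real.cos θ) t s‖ ≤ K) → K ≤ 5000 * |t|⁻¹ →
      ‖∫ θ in (0 : ℝ)..(Real.pi / 2), oscW (r * Real.cos θ) t s * G θ‖ ≤ 5000 * |t|⁻¹ * N := by
    intro K hK hK2
    refine (intervalIntegral.norm_integral_le_of_norm_le hle
      (g := fun θ => K * ‖G θ‖) (Filter.Eventually.of_forall fun x _ => by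
        rw [norm_mul]; exact mul_le_mul_of_nonneg_right (hK x) (norm_nonneg _))
      ((continuous_const.mul hGc.norm).intervalIntegrable _ _)).trans ?_
    rw [intervalIntegral.integral_const_mul]
    exact mul_le_mul hK2 (by linarith) hA0 (by positivity)
  rcases le_or_gt |t| 1 with hsmall | hbig
  · refine simple (7 * 3) (fun θ => norm_oscW_le_triv h1 h4) ?_
    have : 1 ≤ |t|⁻¹ := (one_le_inv₀ hta).2 hsmall
    linarith
  rcases le_or_gt |r| (|t| / 8) with hr | hr
  · refine simple (7 * (24 / |t|)) (fun θ => norm_oscW_le_nonstat ht ?_ h1 h4) ?_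
    · rw [abs_mul]
      have := Real.abs_cos_le_one θ
      have := abs_nonneg r
      nlinarith [abs_nonneg (Real.cos θ)]
    · rw [div_eq_mul_inv]; linarith
  have hst : 1 < √|t| := by
    rw [show (1 : ℝ) = √1 by simp]; exact Real.sqrt_lt_sqrt (by norm_num) hbig
  have hst0 : 0 < √|t| := by linarith
  have hss : √|t| * √|t| = |t| := Real.mul_self_sqrt hta.le
  -- the two angular ranges `[0, d]` and `[d, π/2]` balance at `d = |t|^{-1/2}`
  set d := (√|t|)⁻¹ with hd
  have hd0 : 0 < d := inv_pos.2 hst0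
  have hd1 : d ≤ 1 := inv_le_one_of_one_le₀ hst.le
  have hdd : d * d = |t|⁻¹ := by rw [hd, ← mul_inv, hss]
  have hr0 : r ≠ 0 := by
    rintro rfl
    simp only [abs_zero] at hr
    linarith
  rw [← intervalIntegral.integral_add_adjacent_intervals (b := d)
    ((hWc.fun_mul hGc).intervalIntegrable _ _) ((hWc.fun_mul hGc).intervalIntegrable _ _)]
  have near : ‖∫ θ in (0 : ℝ)..d, oscW (r * Real.cos θ) t s * G θ‖ ≤ 336 * |t|⁻¹ * N := by
    have := intervalIntegral.norm_integral_le_of_norm_le_const (a := 0) (b := d)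
      (C := 7 * (48 / √|t|) * N) (f := fun θ => oscW (r * Real.cos θ) t s * G θ)
      (fun x hx => by
        rw [Set.uIoc_of_le hd0.le] at hx
        rw [norm_mul]
        exact mul_le_mul (norm_oscW_le ht h1 h4) (hNsup x ⟨hx.1.le, by linarith [hx.2]⟩)
          (norm_nonneg _) (by positivity))
    rw [sub_zero, abs_of_pos hd0, div_eq_mul_inv, ← hd] at this
    refine this.trans (le_of_eq ?_)
    rw [← hdd]; ring
  have away := quarter_away (M := 48 / √|t|) hG hG1 hr0 hd0 (by linarith : d ≤ Real.pi / 2)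
    (fun c => norm_oscV_le ht h1 h4) hNsup (by linarith)
  have hri : |r|⁻¹ ≤ 8 * |t|⁻¹ := by
    have : 8 * |t|⁻¹ = (|t| / 8)⁻¹ := by rw [inv_div, div_eq_mul_inv]
    rw [this]
    exact inv_anti₀ (by positivity) hr.le
  have hMd : 48 / √|t| * (10 * (N / d)) = 480 * N := by
    rw [hd]; field_simp; ring
  rw [hMd] at away
  have : |r|⁻¹ * (480 * N) ≤ 8 * |t|⁻¹ * (480 * N) :=
    mul_le_mul_of_nonneg_right hri (by positivity)
  refine (norm_add_le _ _).trans ?_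
  have hp : 0 ≤ |t|⁻¹ * N := by positivity
  nlinarith

/-- The four quarters of a period reduce to the first one by `θ ↦ π - θ`, `π + θ`, `2π - θ`. -/
lemma period_bound {G G1 : ℝ → ℂ} (hG : ∀ x, HasDerivAt G (G1 x) x) (hG1 : Continuous G1)
    {r t s : ℝ} (ht : t ≠ 0) (h1 : 1 ≤ s) (h4 : s ≤ 4) :
    ‖∫ θ in (0 : ℝ)..(2 * Real.pi), oscW (r * Real.cos θ) t s * G θ‖ ≤
      5000 * |t|⁻¹ * ∫ y in (0 : ℝ)..(2 * Real.pi), (‖G y‖ + ‖G1 y‖) := by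
  have hGc : Continuous G := continuous_iff_continuousAt.2 fun x => (hG x).continuousAt
  have hWc : Continuous fun θ => oscW (r * Real.cos θ) t s :=
    (continuous_oscW t).comp (by fun_prop : Continuous fun θ : ℝ => (r * Real.cos θ, s))
  set f : ℝ → ℂ := fun θ => oscW (r * Real.cos θ) t s * G θ with hf
  have hfc : Continuous f := hWc.mul hGc
  set g : ℝ → ℝ := fun y => ‖G y‖ + ‖G1 y‖ with hg
  have hgc : Continuous g := hGc.norm.add hG1.norm
  have b1 := quarter_bound hG hG1 (r := r) ht h1 h4
  have b2 := quarter_bound (G := fun x => G (Real.pi - x)) (G1 := fun x => -G1 (Real.pi - x))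
    (fun x => ((hG (Real.pi - x)).scomp x ((hasDerivAt_id x).const_sub Real.pi)).congr_deriv
      (by simp)) (by fun_prop) (r := -r) ht h1 h4
  have b3 := quarter_bound (G := fun x => G (Real.pi + x)) (G1 := fun x => G1 (Real.pi + x))
    (fun x => ((hG (Real.pi + x)).scomp x ((hasDerivAt_id x).const_add Real.pi)).congr_deriv
      (by simp)) (by fun_prop) (r := -r) ht h1 h4
  have b4 := quarter_bound (G := fun x => G (2 * Real.pi - x))
    (G1 := fun x => -G1 (2 * Real.pi - x))
    (fun x => ((hG (2 * Real.pi - x)).scomp x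
      ((hasDerivAt_id x).const_sub (2 * Real.pi))).congr_deriv
      (by simp)) (by fun_prop) (r := r) ht h1 h4
  have c2 : ∀ x, oscW (-r * Real.cos x) t s * G (Real.pi - x) = f (Real.pi - x) := fun x => by
    simp only [hf, Real.cos_pi_sub]; ring_nf
  have c3 : ∀ x, oscW (-r * Real.cos x) t s * G (Real.pi + x) = f (Real.pi + x) := fun x => by
    simp only [hf, add_comm Real.pi x, Real.cos_add_pi]; ring_nf
  have c4 : ∀ x, oscW (r * Real.cos x) t s * G (2 * Real.pi - x) = f (2 * Real.pi - x) := fun x => by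
    simp only [hf, Real.cos_two_pi_sub]
  simp only [c2, norm_neg] at b2
  simp only [c3] at b3
  simp only [c4, norm_neg] at b4
  have f2 := intervalIntegral.integral_comp_sub_left f Real.pi (a := 0) (b := Real.pi / 2)
  have f3 := intervalIntegral.integral_comp_add_left f Real.pi (a := 0) (b := Real.pi / 2)
  have f4 := intervalIntegral.integral_comp_sub_left f (2 * Real.pi) (a := 0) (b := Real.pi / 2)
  have g2 := intervalIntegral.integral_comp_sub_left g Real.pi (a := 0) (b := Real.pi / 2)
  have g3 := intervalIntegral.integral_comp_add_left g Real.pi (a := 0) (b := Real.pi / 2)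
  have g4 := intervalIntegral.integral_comp_sub_left g (2 * Real.pi) (a := 0) (b := Real.pi / 2)
  rw [f2] at b2
  rw [f3] at b3
  rw [f4] at b4
  rw [show Real.pi - Real.pi / 2 = Real.pi / 2 by ring, sub_zero] at b2 g2
  rw [add_zero] at b3 g3
  rw [show 2 * Real.pi - Real.pi / 2 = Real.pi + Real.pi / 2 by ring, sub_zero] at b4 g4
  simp only [hg] at g2 g3 g4
  rw [g2] at b2
  rw [g3] at b3
  rw [g4] at b4
  have sf : ∫ θ in (0 : ℝ)..(2 * Real.pi), f θ =
      (∫ θ in (0 : ℝ)..(Real.pi / 2), f θ) + (∫ θ in (Real.pi / 2)..Real.pi, f θ)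
      + (∫ θ in Real.pi..(Real.pi + Real.pi / 2), f θ)
      + ∫ θ in (Real.pi + Real.pi / 2)..(2 * Real.pi), f θ := by
    rw [intervalIntegral.integral_add_adjacent_intervals (hfc.intervalIntegrable _ _)
      (hfc.intervalIntegrable _ _), intervalIntegral.integral_add_adjacent_intervals
      (hfc.intervalIntegrable _ _) (hfc.intervalIntegrable _ _),
      intervalIntegral.integral_add_adjacent_intervals (hfc.intervalIntegrable _ _)
      (hfc.intervalIntegrable _ _)]
  have sg : ∫ θ in (0 : ℝ)..(2 * Real.pi), g θ =
      (∫ θ in (0 : ℝ)..(Real.pi / 2), g θ) + (∫ θ in (Real.pi / 2)..Real.pi, g θ)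
      + (∫ θ in Real.pi..(Real.pi + Real.pi / 2), g θ)
      + ∫ θ in (Real.pi + Real.pi / 2)..(2 * Real.pi), g θ := by
    rw [intervalIntegral.integral_add_adjacent_intervals (hgc.intervalIntegrable _ _)
      (hgc.intervalIntegrable _ _), intervalIntegral.integral_add_adjacent_intervals
      (hgc.intervalIntegrable _ _) (hgc.intervalIntegrable _ _),
      intervalIntegral.integral_add_adjacent_intervals (hgc.intervalIntegrable _ _)
      (hgc.intervalIntegrable _ _)]
  rw [sf, sg]
  refine (norm_add_le _ _).trans ((add_le_add ((norm_add_le _ _).trans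
    (add_le_add (norm_add_le _ _) le_rfl)) le_rfl).trans ?_)
  rw [mul_add, mul_add, mul_add]
  exact add_le_add (add_le_add (add_le_add b1 b2) b3) b4

/-- Uniform estimate for the oscillatory integral in polar coordinates over the annulus
`1 ≤ s ≤ 4`: one integration by parts in the radius, then `period_bound` at each radius. -/
lemma polar_core {H Hs Hst : ℝ → ℝ → ℂ}
    (hs : ∀ s θ, HasDerivAt (fun s => H s θ) (Hs s θ) s)
    (hst : ∀ s θ, HasDerivAt (fun θ => Hs s θ) (Hst s θ) θ)
    (cHs : Continuous fun q : ℝ × ℝ => Hs q.1 q.2)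
    (cHst : Continuous fun q : ℝ × ℝ => Hst q.1 q.2)
    (h1 : ∀ θ, H 1 θ = 0) (h4 : ∀ θ, H 4 θ = 0) (r : ℝ) {t : ℝ} (ht : t ≠ 0) :
    ‖∫ θ in (0 : ℝ)..(2 * Real.pi), ∫ s in (1 : ℝ)..4,
        osc (r * Real.cos θ) t s * (s : ℂ) * H s θ‖ ≤
      5000 * |t|⁻¹ * ∫ s in (1 : ℝ)..4, ∫ θ in (0 : ℝ)..(2 * Real.pi),
        (‖Hs s θ‖ + ‖Hst s θ‖) := by
  have ibp : ∀ θ, ∫ s in (1 : ℝ)..4, osc (r * Real.cos θ) t s * (s : ℂ) * H s θ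
      = -∫ s in (1 : ℝ)..4, oscW (r * Real.cos θ) t s * Hs s θ := by
    intro θ
    have hHsc : Continuous fun s => Hs s θ :=
      cHs.comp (by fun_prop : Continuous fun s : ℝ => (s, θ))
    have := intervalIntegral.integral_mul_deriv_eq_deriv_mul (a := 1) (b := 4)
      (u := oscW (r * Real.cos θ) t) (v := fun s => H s θ)
      (fun x _ => oscW_hasDerivAt _ t x) (fun x _ => hs x θ)
      (((continuous_osc_right _ t).mul Complex.continuous_ofReal).intervalIntegrable _ _)
      (hHsc.intervalIntegrable _ _)
    rw [h1, h4, mul_zero, mul_zero, sub_zero, zero_sub] at this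
    rw [this, neg_neg]
  simp_rw [ibp]
  rw [intervalIntegral.integral_neg, norm_neg]
  have hcont : Continuous fun q : ℝ × ℝ => oscW (r * Real.cos q.1) t q.2 * Hs q.2 q.1 :=
    ((continuous_oscW t).comp (by fun_prop : Continuous fun q : ℝ × ℝ =>
      (r * Real.cos q.1, q.2))).mul (cHs.comp continuous_swap)
  rw [intervalIntegral_intervalIntegral_swap
    (F := fun θ s => oscW (r * Real.cos θ) t s * Hs s θ)
    ((hcont.continuousOn.integrableOn_compact (K := Set.uIcc 0 (2 * Real.pi) ×ˢ Set.uIcc 1 4)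
      (isCompact_uIcc.prod isCompact_uIcc)).mono_set
      (Set.prod_mono Set.uIoc_subset_uIcc Set.uIoc_subset_uIcc))]
  rw [← intervalIntegral.integral_const_mul]
  have hc2 : Continuous fun s : ℝ => ∫ θ in (0 : ℝ)..(2 * Real.pi), (‖Hs s θ‖ + ‖Hst s θ‖) := by
    refine intervalIntegral.continuous_parametric_intervalIntegral_of_continuous'
      (f := fun s θ => ‖Hs s θ‖ + ‖Hst s θ‖) ?_ _ _
    exact cHs.norm.add cHst.norm
  apply intervalIntegral.norm_integral_le_of_norm_le (by norm_num)
  · refine Filter.Eventually.of_forall fun s hs' => ?_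
    exact period_bound (fun θ => hst s θ)
      (cHst.comp (by fun_prop : Continuous fun θ : ℝ => (s, θ))) ht hs'.1.le hs'.2
  · exact (continuous_const.mul hc2).intervalIntegrable _ _

/-! ### The vector fields on the Schwartz space -/

open LineDeriv SchwartzMap

/-- The Schwartz function `x ↦ ⟪x, u⟫ ∂_v g(x)`. -/
def coordDeriv (u v : E2) (g : 𝓢(E2, ℂ)) : 𝓢(E2, ℂ) :=
  smulLeftCLM ℂ (fun x : E2 => inner ℝ x u) (∂_{v} g)

lemma coordDeriv_apply (u v : E2) (g : 𝓢(E2, ℂ)) (x : E2) :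
    coordDeriv u v g x = (inner ℝ x u : ℝ) • fderiv ℝ g x v := by
  have : (fun x : E2 => inner ℝ x u).HasTemperateGrowth := by fun_prop
  rw [coordDeriv, smulLeftCLM_apply_apply this, lineDerivOp_apply_eq_fderiv]

/-- On the Fourier side `x_u ∂_v` becomes `-∂_u ξ_v`. -/
lemma fourier_coordDeriv (u v : E2) (g : 𝓢(E2, ℂ)) (ξ : E2) :
    𝓕 (coordDeriv u v g) ξ = -((inner ℝ u v : ℝ) • 𝓕 g ξ + coordDeriv v u (𝓕 g) ξ) := by
  have hu : (fun x : E2 => inner ℝ x u).HasTemperateGrowth := by fun_prop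
  have hv : (fun x : E2 => inner ℝ x v).HasTemperateGrowth := by fun_prop
  have h1 := lineDerivOp_fourier_eq (∂_{v} g) u
  rw [fourier_lineDerivOp_eq, FourierTransform.fourier_smul, lineDerivOp_smul] at h1
  have hc : (2 * Real.pi * Complex.I : ℂ) ≠ 0 := by
    simp [Real.pi_ne_zero]
  have h2 : 𝓕 (coordDeriv u v g) = -∂_{u} (smulLeftCLM ℂ (fun x : E2 => inner ℝ x v) (𝓕 g)) := by
    rw [neg_smul, ← smul_neg] at h1
    have := smul_right_injective _ hc h1
    rw [coordDeriv, this, neg_neg]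
  rw [h2, neg_apply, lineDerivOp_apply_eq_fderiv, coordDeriv_apply]
  congr 1
  have h3 : HasFDerivAt (⇑(smulLeftCLM ℂ (fun x : E2 => inner ℝ x v) (𝓕 g)))
      ((inner ℝ ξ v : ℝ) • fderiv ℝ (𝓕 g : 𝓢(E2, ℂ)) ξ
        + (((innerSL ℝ).flip v : E2 →L[ℝ] ℝ)).smulRight (𝓕 g ξ)) ξ := by
    rw [smulLeftCLM_apply hv]
    exact (((innerSL ℝ).flip v : E2 →L[ℝ] ℝ).hasFDerivAt (x := ξ)).fun_smul
      ((𝓕 g).hasFDerivAt ξ)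
  rw [h3.fderiv]
  exact add_comm _ _

/-- The standard basis of the plane. -/
def e2 (i : Fin 2) : E2 := EuclideanSpace.single i 1

lemma inner_e2 (x : E2) (i : Fin 2) : (inner ℝ x (e2 i) : ℝ) = x i := by
  simp [e2, PiLp.inner_apply]

lemma vec_eq (x : E2) : x = x 0 • e2 0 + x 1 • e2 1 := by
  ext i; fin_cases i <;> simp [e2]

lemma rotv_eq (x : E2) : rotv x = x 0 • e2 1 - x 1 • e2 0 := by
  ext i; fin_cases i <;> simp [e2, rotv]

/-- The scaling field as an operator on Schwartz functions. -/
def SSc (g : 𝓢(E2, ℂ)) : 𝓢(E2, ℂ) := coordDeriv (e2 0) (e2 0) g + coordDeriv (e2 1) (e2 1) g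

/-- The rotation field as an operator on Schwartz functions. -/
def SOm (g : 𝓢(E2, ℂ)) : 𝓢(E2, ℂ) := coordDeriv (e2 0) (e2 1) g - coordDeriv (e2 1) (e2 0) g

lemma SSc_apply (g : 𝓢(E2, ℂ)) (x : E2) : SSc g x = fderiv ℝ g x x := by
  conv_rhs => rw [vec_eq x, map_add, map_smul, map_smul, ← vec_eq x]
  simp [SSc, coordDeriv_apply, inner_e2]

lemma SOm_apply (g : 𝓢(E2, ℂ)) (x : E2) : SOm g x = fderiv ℝ g x (rotv x) := by
  rw [rotv_eq, map_sub, map_smul, map_smul]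
  simp [SOm, coordDeriv_apply, inner_e2]

lemma coe_SSc (g : 𝓢(E2, ℂ)) : ⇑(SSc g) = Sc g := funext (SSc_apply g)

lemma coe_SOm (g : 𝓢(E2, ℂ)) : ⇑(SOm g) = Om g := funext (SOm_apply g)

lemma fourier_SSc (g : 𝓢(E2, ℂ)) : 𝓕 (SSc g) = -((2 : ℝ) • 𝓕 g + SSc (𝓕 g)) := by
  ext ξ
  rw [SSc, FourierTransform.fourier_add, add_apply, fourier_coordDeriv,
    fourier_coordDeriv, SSc, inner_e2, inner_e2]
  simp [e2]
  ring

lemma fourier_SOm (g : 𝓢(E2, ℂ)) : 𝓕 (SOm g) = SOm (𝓕 g) := by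
  ext ξ
  have e : 𝓕 (SOm g) = 𝓕 (coordDeriv (e2 0) (e2 1) g) - 𝓕 (coordDeriv (e2 1) (e2 0) g) :=
    (fourierTransformCLM ℂ).map_sub _ _
  rw [e, sub_apply, fourier_coordDeriv, fourier_coordDeriv, SOm, inner_e2, inner_e2]
  simp [e2]
  ring

/-- Rotation by a right angle as a continuous linear map. -/
def rotL : E2 →L[ℝ] E2 :=
  ((innerSL ℝ).flip (e2 0) : E2 →L[ℝ] ℝ).smulRight (e2 1)
    - ((innerSL ℝ).flip (e2 1) : E2 →L[ℝ] ℝ).smulRight (e2 0)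

lemma rotL_apply (x : E2) : rotL x = rotv x := by
  rw [rotv_eq, ← inner_e2 x 0, ← inner_e2 x 1]
  rfl

lemma fderiv_linear_field (h : 𝓢(E2, ℂ)) (L : E2 →L[ℝ] E2) (x v : E2) :
    fderiv ℝ (fun y => fderiv ℝ h y (L y)) x v
      = fderiv ℝ (fderiv ℝ h) x v (L x) + fderiv ℝ h x (L v) := by
  have hd : DifferentiableAt ℝ (fderiv ℝ h) x :=
    ((h.smooth 2).fderiv_right (m := 1) (by norm_num)).differentiable (by norm_num) x
  have := hd.hasFDerivAt.clm_apply (L.hasFDerivAt (x := x))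
  rw [this.fderiv]
  simp [add_comm]

/-- Scaling commutes with rotation, by symmetry of the second derivative. -/
lemma SOm_SSc (h : 𝓢(E2, ℂ)) : SOm (SSc h) = SSc (SOm h) := by
  ext x
  rw [SOm_apply, SSc_apply]
  have e1 : (⇑(SSc h)) = fun y => fderiv ℝ h y (ContinuousLinearMap.id ℝ E2 y) :=
    funext fun y => by rw [SSc_apply]; rfl
  have e3 : (⇑(SOm h)) = fun y => fderiv ℝ h y (rotL y) :=
    funext fun y => by rw [SOm_apply, rotL_apply]
  rw [e1, e3, fderiv_linear_field, fderiv_linear_field]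
  have hs : IsSymmSndFDerivAt ℝ (⇑h) x :=
    ((h.smooth 2).contDiffAt).isSymmSndFDerivAt (by simp)
  rw [hs.eq, rotL_apply]
  simp

/-! ### The `L²` norm on Schwartz functions -/

/-- The `L²` norm of a Schwartz function, as a norm in `Lp`. -/
def N2 (g : 𝓢(E2, ℂ)) : ℝ := ‖g.toLp 2‖

lemma L2n_coe (g : 𝓢(E2, ℂ)) : L2n g = N2 g := by
  rw [N2, SchwartzMap.norm_toLp' (by norm_num) (by norm_num), L2n]
  simp

lemma N2_nonneg (g : 𝓢(E2, ℂ)) : 0 ≤ N2 g := norm_nonneg _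

lemma N2_add (g h : 𝓢(E2, ℂ)) : N2 (g + h) ≤ N2 g + N2 h := by
  have := norm_add_le (g.toLp 2 (volume : Measure E2)) (h.toLp 2 volume)
  have e : (g + h).toLp 2 (volume : Measure E2) = g.toLp 2 volume + h.toLp 2 volume :=
    (toLpCLM ℝ ℂ 2 (volume : Measure E2)).map_add g h
  rwa [N2, e]

lemma N2_smul (c : ℝ) (g : 𝓢(E2, ℂ)) : N2 (c • g) = |c| * N2 g := by
  have e : (c • g).toLp 2 (volume : Measure E2) = c • g.toLp 2 volume :=
    (toLpCLM ℝ ℂ 2 (volume : Measure E2)).map_smul c g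
  rw [N2, e, norm_smul, N2, Real.norm_eq_abs]

lemma N2_neg (g : 𝓢(E2, ℂ)) : N2 (-g) = N2 g := by
  have := N2_smul (-1) g
  simpa using this

lemma N2_fourier (g : 𝓢(E2, ℂ)) : N2 (𝓕 g) = N2 g := norm_fourier_toL2_eq g

/-- Plancherel for the scaling field, up to a lower order term. -/
lemma N2_SSc_fourier (g : 𝓢(E2, ℂ)) : N2 (SSc (𝓕 g)) ≤ N2 (SSc g) + 2 * N2 g := by
  have e : SSc (𝓕 g) = -(𝓕 (SSc g)) + (-2 : ℝ) • 𝓕 g := by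
    rw [fourier_SSc]; simp
  rw [e]
  refine (N2_add _ _).trans ?_
  rw [N2_neg, N2_smul, N2_fourier, N2_fourier]
  norm_num

lemma N2_SSc_le (g : 𝓢(E2, ℂ)) : N2 (SSc g) ≤ N2 (SSc (𝓕 g)) + 2 * N2 (𝓕 g) := by
  rw [← N2_fourier (SSc g), fourier_SSc, N2_neg]
  refine (N2_add _ _).trans ?_
  rw [N2_smul, abs_of_pos (by norm_num : (0 : ℝ) < 2)]
  linarith

lemma N2_SOm (g : 𝓢(E2, ℂ)) : N2 (SOm g) = N2 (SOm (𝓕 g)) := by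
  rw [← N2_fourier (SOm g), fourier_SOm]

/-! ### Dyadic dilations of a fixed Schwartz cutoff -/

/-- Dilation `ξ ↦ 2^{-ℓ} ξ`. -/
def dil (ℓ : ℤ) : E2 →L[ℝ] E2 := ((2 : ℝ) ^ (-ℓ)) • ContinuousLinearMap.id ℝ E2

lemma dil_apply (ℓ : ℤ) (ξ : E2) : dil ℓ ξ = ((2 : ℝ) ^ (-ℓ)) • ξ := rfl

/-- The Schwartz function `ξ ↦ M(2^{-ℓ} ξ) F(ξ)`. -/
def dprod (M F : 𝓢(E2, ℂ)) (ℓ : ℤ) : 𝓢(E2, ℂ) :=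
  smulLeftCLM ℂ (fun ξ => M (dil ℓ ξ)) F

lemma dprod_apply (M F : 𝓢(E2, ℂ)) (ℓ : ℤ) (ξ : E2) :
    dprod M F ℓ ξ = M (dil ℓ ξ) * F ξ := by
  have : (fun ξ => M (dil ℓ ξ)).HasTemperateGrowth :=
    M.hasTemperateGrowth.comp (dil ℓ).hasTemperateGrowth
  rw [dprod, smulLeftCLM_apply_apply this, smul_eq_mul]

lemma fderiv_dprod (M F : 𝓢(E2, ℂ)) (ℓ : ℤ) (ξ v : E2) :
    fderiv ℝ (dprod M F ℓ) ξ v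
      = fderiv ℝ M (dil ℓ ξ) (dil ℓ v) * F ξ + M (dil ℓ ξ) * fderiv ℝ F ξ v := by
  have e : ⇑(dprod M F ℓ) = fun ξ => M (dil ℓ ξ) * F ξ := funext (dprod_apply M F ℓ)
  have h1 : HasFDerivAt (fun ξ => M (dil ℓ ξ)) ((fderiv ℝ M (dil ℓ ξ)).comp (dil ℓ)) ξ :=
    (M.hasFDerivAt (dil ℓ ξ)).comp ξ (dil ℓ).hasFDerivAt
  rw [e, (h1.fun_mul (F.hasFDerivAt ξ)).fderiv]
  simp
  ring

lemma SSc_dprod (M F : 𝓢(E2, ℂ)) (ℓ : ℤ) :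
    SSc (dprod M F ℓ) = dprod (SSc M) F ℓ + dprod M (SSc F) ℓ := by
  ext ξ
  rw [SSc_apply, fderiv_dprod, add_apply, dprod_apply, dprod_apply, SSc_apply, SSc_apply]

lemma SOm_dprod (M F : 𝓢(E2, ℂ)) (ℓ : ℤ) :
    SOm (dprod M F ℓ) = dprod (SOm M) F ℓ + dprod M (SOm F) ℓ := by
  ext ξ
  rw [SOm_apply, fderiv_dprod, add_apply, dprod_apply, dprod_apply, SOm_apply, SOm_apply]
  have : dil ℓ (rotv ξ) = rotv (dil ℓ ξ) := by
    rw [← rotL_apply, ← rotL_apply, dil_apply, dil_apply, map_smul]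
  rw [this]

lemma SSc_add (g h : 𝓢(E2, ℂ)) : SSc (g + h) = SSc g + SSc h := by
  ext ξ
  have : fderiv ℝ (⇑(g + h)) ξ = fderiv ℝ g ξ + fderiv ℝ h ξ :=
    ((g.hasFDerivAt ξ).add (h.hasFDerivAt ξ)).fderiv
  rw [SSc_apply, add_apply, SSc_apply, SSc_apply, this]; rfl

lemma SSc_zero (g : 𝓢(E2, ℂ)) : SSc g 0 = 0 := by rw [SSc_apply, map_zero]

lemma SOm_zero (g : 𝓢(E2, ℂ)) : SOm g 0 = 0 := by
  rw [SOm_apply, ← rotL_apply, map_zero, map_zero]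

/-- `‖h_ℓ‖₂ ≤ K 2^{-|ℓ|}` for some `K`, so that `∑ 2^{ℓ/2} ‖h_ℓ‖₂` converges. -/
def DyadicSmall (h : ℤ → 𝓢(E2, ℂ)) : Prop :=
  ∃ K : ℝ, ∀ ℓ : ℤ, N2 (h ℓ) ≤ K * (2 : ℝ) ^ ℓ ∧ N2 (h ℓ) ≤ K * (2 : ℝ) ^ (-ℓ)

lemma DyadicSmall.add {g h : ℤ → 𝓢(E2, ℂ)} (hg : DyadicSmall g) (hh : DyadicSmall h) :
    DyadicSmall (fun ℓ => g ℓ + h ℓ) := by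
  obtain ⟨K, hK⟩ := hg
  obtain ⟨L, hL⟩ := hh
  refine ⟨K + L, fun ℓ => ⟨(N2_add _ _).trans ?_, (N2_add _ _).trans ?_⟩⟩
  · linarith [(hK ℓ).1, (hL ℓ).1]
  · linarith [(hK ℓ).2, (hL ℓ).2]

lemma N2_le_of_pointwise {g h : 𝓢(E2, ℂ)} {c : ℝ} (hc : 0 ≤ c)
    (H : ∀ x, ‖g x‖ ≤ c * ‖h x‖) : N2 g ≤ c * N2 h := by
  rw [← abs_of_nonneg hc, ← N2_smul, ← L2n_coe, ← L2n_coe, L2n, L2n]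
  refine Real.rpow_le_rpow (integral_nonneg fun x => by positivity) ?_ (by norm_num)
  have hi : ∀ f : 𝓢(E2, ℂ), Integrable (fun x => ‖f x‖ ^ 2) := fun f => by
    simpa using (f.memLp 2 volume).integrable_norm_pow (by norm_num)
  refine integral_mono (hi _) (hi _) fun x => ?_
  have : ‖(c • h) x‖ = c * ‖h x‖ := by
    rw [smul_apply, norm_smul, Real.norm_eq_abs, abs_of_nonneg hc]
  simp only [this]
  gcongr
  exact H x

/-- The dilate `M(2^{-ℓ}·)` as a Schwartz function. -/
def dilS (M : 𝓢(E2, ℂ)) (ℓ : ℤ) : 𝓢(E2, ℂ) :=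
  compCLMOfContinuousLinearEquiv ℝ
    (ContinuousLinearEquiv.smulLeft (R₁ := ℝ) (M₁ := E2)
      (Units.mk0 ((2 : ℝ) ^ (-ℓ)) (by positivity))) M

lemma dilS_apply (M : 𝓢(E2, ℂ)) (ℓ : ℤ) (ξ : E2) : dilS M ℓ ξ = M (dil ℓ ξ) := rfl

lemma N2_dilS (M : 𝓢(E2, ℂ)) (ℓ : ℤ) : N2 (dilS M ℓ) = 2 ^ ℓ * N2 M := by
  rw [← L2n_coe, ← L2n_coe, L2n, L2n]
  have h := Measure.integral_comp_smul (volume : Measure E2) (fun x => ‖M x‖ ^ 2) ((2 : ℝ) ^ (-ℓ))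
  have e : (fun x => ‖dilS M ℓ x‖ ^ 2) = fun x => ‖M ((2 : ℝ) ^ (-ℓ) • x)‖ ^ 2 :=
    funext fun x => by rw [dilS_apply, dil_apply]
  rw [e, h]
  have h2 : (0 : ℝ) < 2 ^ ℓ := by positivity
  have h3 : |(((2 : ℝ) ^ (-ℓ)) ^ (Module.finrank ℝ E2))⁻¹| = (2 ^ ℓ) ^ 2 := by
    rw [finrank_euclideanSpace_fin, zpow_neg, inv_pow, inv_inv, abs_of_pos (by positivity)]
  rw [h3, smul_eq_mul, Real.mul_rpow (by positivity) (integral_nonneg fun x => by positivity),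
    ← Real.rpow_natCast, ← Real.rpow_mul h2.le]
  norm_num

/-- For `ℓ → -∞` the decay comes from `‖M(2^{-ℓ}·)‖₂ = 2^ℓ ‖M‖₂`, for `ℓ → ∞` from
`|M(2^{-ℓ} ξ)| ≤ K 2^{-ℓ} |ξ|`, a consequence of `M 0 = 0`. -/
lemma dyadicSmall_dprod (M F : 𝓢(E2, ℂ)) (hM : M 0 = 0) : DyadicSmall (dprod M F) := by
  obtain ⟨B, hB0, hB⟩ : ∃ B : ℝ, 0 ≤ B ∧ ∀ x, ‖F x‖ ≤ B :=
    ⟨_, apply_nonneg _ _, fun x => norm_le_seminorm ℝ F x⟩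
  obtain ⟨L, hL0, hL⟩ : ∃ L : ℝ, 0 ≤ L ∧ ∀ x, ‖M x‖ ≤ L * ‖x‖ := by
    refine ⟨_, apply_nonneg (SchwartzMap.seminorm ℝ 0 0) (fderivCLM ℝ E2 ℂ M), fun x => ?_⟩
    have := Convex.norm_image_sub_le_of_norm_fderiv_le (𝕜 := ℝ) (f := M) (s := Set.univ)
      (x := 0) (y := x) (fun y _ => M.differentiableAt)
      (fun y _ => norm_le_seminorm ℝ (fderivCLM ℝ E2 ℂ M) y) convex_univ trivial trivial
    simpa [hM] using this
  obtain ⟨G, hG⟩ : ∃ G : 𝓢(E2, ℂ), ∀ x, ‖x‖ * ‖F x‖ ≤ ‖G x‖ := by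
    have hg : (fun x : E2 => 1 + ‖x‖ ^ 2).HasTemperateGrowth :=
      (Function.HasTemperateGrowth.const 1).add (Function.hasTemperateGrowth_norm_sq (H := E2))
    refine ⟨smulLeftCLM ℂ (fun x : E2 => 1 + ‖x‖ ^ 2) F, fun x => ?_⟩
    rw [smulLeftCLM_apply_apply hg, norm_smul, Real.norm_eq_abs, abs_of_pos (by positivity)]
    gcongr
    nlinarith [sq_nonneg (‖x‖ - 1), norm_nonneg x]
  refine ⟨B * N2 M + L * N2 G, fun ℓ => ⟨?_, ?_⟩⟩
  · have h1 : N2 (dprod M F ℓ) ≤ B * N2 (dilS M ℓ) := by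
      refine N2_le_of_pointwise hB0 fun x => ?_
      rw [dprod_apply, dilS_apply, norm_mul, mul_comm]
      gcongr
      exact hB x
    rw [N2_dilS] at h1
    have : 0 ≤ L * N2 G * (2 : ℝ) ^ ℓ := by have := N2_nonneg G; positivity
    linarith
  · have h1 : N2 (dprod M F ℓ) ≤ (L * (2 : ℝ) ^ (-ℓ)) * N2 G := by
      refine N2_le_of_pointwise (by positivity) fun x => ?_
      rw [dprod_apply, norm_mul]
      calc _ ≤ (L * ‖dil ℓ x‖) * ‖F x‖ := by gcongr; exact hL _
        _ = L * (2 : ℝ) ^ (-ℓ) * (‖x‖ * ‖F x‖) := by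
          rw [dil_apply, norm_smul, Real.norm_eq_abs, abs_of_pos (by positivity)]; ring
        _ ≤ _ := by gcongr; exact hG x
    have : 0 ≤ B * N2 M * (2 : ℝ) ^ (-ℓ) := by have := N2_nonneg M; positivity
    linarith

lemma DyadicSmall.summable {h : ℤ → 𝓢(E2, ℂ)} (hh : DyadicSmall h) :
    Summable fun ℓ : ℤ => (2 : ℝ) ^ ((ℓ : ℝ) / 2) * N2 (h ℓ) := by
  obtain ⟨K, hK⟩ := hh
  have hK0 : 0 ≤ K := by simpa using (N2_nonneg _).trans (hK 0).1
  have hq : Summable fun n : ℕ => K * ((2 : ℝ) ^ (-(1 / 2) : ℝ)) ^ n :=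
    (summable_geometric_of_lt_one (by positivity)
      (Real.rpow_lt_one_of_one_lt_of_neg (by norm_num) (by norm_num))).mul_left K
  refine Summable.of_nat_of_neg ?_ ?_
  · refine Summable.of_nonneg_of_le (fun n => mul_nonneg (by positivity) (N2_nonneg _))
      (fun n => ?_) hq
    calc _ ≤ (2 : ℝ) ^ (((n : ℤ) : ℝ) / 2) * (K * (2 : ℝ) ^ (-(n : ℤ))) := by
          gcongr; exact (hK n).2
      _ = _ := by
          rw [← Real.rpow_intCast, ← Real.rpow_natCast, ← Real.rpow_mul (by norm_num),
            mul_left_comm, ← Real.rpow_add (by norm_num)]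
          congr 2; push_cast; ring
  · refine Summable.of_nonneg_of_le (fun n => mul_nonneg (by positivity) (N2_nonneg _))
      (fun n => ?_) hq
    calc _ ≤ (2 : ℝ) ^ (((-(n : ℤ) : ℤ) : ℝ) / 2) * (K * (2 : ℝ) ^ (-(n : ℤ))) := by
          gcongr; exact (hK _).1
      _ ≤ _ := by
          rw [← Real.rpow_intCast, ← Real.rpow_natCast, ← Real.rpow_mul (by norm_num),
            mul_left_comm, ← Real.rpow_add (by norm_num)]
          gcongr
          · norm_num
          · push_cast
            have : (0 : ℝ) ≤ n := by positivity
            linarith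

/-! ### The Littlewood–Paley cutoff -/

/-- The hypotheses on the radial profile `φ` of the Littlewood–Paley cutoffs. -/
structure IsCutoff (φ : ℝ → ℝ) : Prop where
  smooth : ContDiff ℝ (⊤ : ℕ∞) φ
  mem : ∀ x, φ x ∈ Set.Icc (0 : ℝ) 1
  supp : Function.support φ ⊆ Set.Icc (-(8 / 5) : ℝ) (8 / 5)
  one : ∀ x ∈ Set.Icc (-(5 / 4) : ℝ) (5 / 4), φ x = 1

lemma IsCutoff.eq_zero {φ : ℝ → ℝ} (hφ : IsCutoff φ) {x : ℝ} (hx : 8 / 5 < x) : φ x = 0 := by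
  by_contra h
  exact absurd (hφ.supp h).2 (not_le.2 hx)

lemma IsCutoff.eq_one {φ : ℝ → ℝ} (hφ : IsCutoff φ) {x : ℝ} (h0 : 0 ≤ x) (hx : x ≤ 5 / 4) :
    φ x = 1 := hφ.one x ⟨by linarith, hx⟩

lemma IsCutoff.contDiff_norm {φ : ℝ → ℝ} (hφ : IsCutoff φ) {c : ℝ} (hc : 0 < c) :
    ContDiff ℝ (⊤ : ℕ∞) fun ξ : E2 => φ (c * ‖ξ‖) := by
  rw [contDiff_iff_contDiffAt]
  intro ξ
  by_cases h : ξ = 0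
  · subst h
    have : (fun ξ : E2 => φ (c * ‖ξ‖)) =ᶠ[nhds 0] fun _ => 1 := by
      have hb : Metric.ball (0 : E2) (5 / 4 / c) ∈ nhds (0 : E2) :=
        Metric.ball_mem_nhds _ (by positivity)
      filter_upwards [hb] with ξ hξ
      rw [mem_ball_zero_iff, lt_div_iff₀ hc] at hξ
      exact hφ.eq_one (by positivity) (by linarith)
    exact contDiffAt_const.congr_of_eventuallyEq this
  · exact hφ.smooth.contDiffAt.comp ξ (contDiffAt_const.mul (contDiffAt_norm ℝ h))

/-- The base Littlewood–Paley bump `φ(|ξ|) - φ(2|ξ|)` as a function. -/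
def bumpFun (φ : ℝ → ℝ) (ξ : E2) : ℂ := ((φ (1 * ‖ξ‖) - φ (2 * ‖ξ‖) : ℝ) : ℂ)

lemma bumpFun_eq_zero {φ : ℝ → ℝ} (hφ : IsCutoff φ) {ξ : E2}
    (h : ‖ξ‖ ≤ 5 / 8 ∨ 8 / 5 < ‖ξ‖) : bumpFun φ ξ = 0 := by
  have := norm_nonneg ξ
  rcases h with h | h
  · rw [bumpFun, hφ.eq_one (by linarith) (by linarith), hφ.eq_one (by linarith) (by linarith)]
    simp
  · rw [bumpFun, hφ.eq_zero (by linarith), hφ.eq_zero (by linarith)]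
    simp

/-- The base Littlewood–Paley bump as a Schwartz function. -/
def bump {φ : ℝ → ℝ} (hφ : IsCutoff φ) : 𝓢(E2, ℂ) :=
  HasCompactSupport.toSchwartzMap (f := bumpFun φ)
    (HasCompactSupport.of_support_subset_isCompact (isCompact_closedBall (0 : E2) (8 / 5))
      fun ξ hξ => by
        by_contra h
        rw [mem_closedBall_zero_iff, not_le] at h
        exact hξ (bumpFun_eq_zero hφ (Or.inr h)))
    (Complex.ofRealCLM.contDiff.comp
      ((hφ.contDiff_norm one_pos).sub (hφ.contDiff_norm two_pos)))

lemma bump_apply {φ : ℝ → ℝ} (hφ : IsCutoff φ) (ξ : E2) : bump hφ ξ = bumpFun φ ξ := rfl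

/-- The frequency-localised profile `φ_ℓ f̂`. -/
def locS {φ : ℝ → ℝ} (hφ : IsCutoff φ) (f : 𝓢(E2, ℂ)) (ℓ : ℤ) : 𝓢(E2, ℂ) :=
  dprod (bump hφ) (𝓕 f) ℓ

lemma norm_dil (ℓ : ℤ) (ξ : E2) : ‖dil ℓ ξ‖ = (2 : ℝ) ^ (-ℓ) * ‖ξ‖ := by
  rw [dil_apply, norm_smul, Real.norm_eq_abs, abs_of_pos (by positivity)]

lemma locS_apply {φ : ℝ → ℝ} (hφ : IsCutoff φ) (f : 𝓢(E2, ℂ)) (ℓ : ℤ) (ξ : E2) :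
    locS hφ f ℓ ξ
      = ((φ ((2 : ℝ) ^ (-ℓ) * ‖ξ‖) - φ ((2 : ℝ) ^ (-ℓ + 1) * ‖ξ‖) : ℝ) : ℂ) * 𝓕 (⇑f) ξ := by
  rw [locS, dprod_apply, bump_apply, bumpFun, norm_dil, one_mul, zpow_add₀ two_ne_zero, zpow_one,
    ← mul_assoc, mul_comm 2]
  rfl

lemma LP_eq {φ : ℝ → ℝ} (hφ : IsCutoff φ) (f : 𝓢(E2, ℂ)) (ℓ : ℤ) :
    LP φ ℓ f = ⇑(𝓕⁻ (locS hφ f ℓ) : 𝓢(E2, ℂ)) := by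
  rw [fourierInv_coe]
  funext x
  have : ⇑(locS hφ f ℓ) = fun ξ =>
      ((φ ((2 : ℝ) ^ (-ℓ) * ‖ξ‖) - φ ((2 : ℝ) ^ (-ℓ + 1) * ‖ξ‖) : ℝ) : ℂ) * 𝓕 (⇑f) ξ :=
    funext (locS_apply hφ f ℓ)
  rw [LP, fm, this]

lemma locS_eq_zero {φ : ℝ → ℝ} (hφ : IsCutoff φ) (f : 𝓢(E2, ℂ)) (ℓ : ℤ) {ξ : E2}
    (h : ‖ξ‖ ≤ 5 / 8 * 2 ^ ℓ ∨ 8 / 5 * 2 ^ ℓ < ‖ξ‖) : locS hφ f ℓ ξ = 0 := by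
  rw [locS, dprod_apply, bump_apply, bumpFun_eq_zero hφ, zero_mul]
  have h2 : (0 : ℝ) < 2 ^ ℓ := by positivity
  rw [norm_dil, zpow_neg, ← div_eq_inv_mul, div_le_iff₀ h2, lt_div_iff₀ h2]
  exact h

lemma bump_zero {φ : ℝ → ℝ} (hφ : IsCutoff φ) : bump hφ 0 = 0 := by
  rw [bump_apply, bumpFun_eq_zero hφ]
  left; simp; norm_num

lemma dyadicSmall_locS {φ : ℝ → ℝ} (hφ : IsCutoff φ) (f : 𝓢(E2, ℂ)) :
    DyadicSmall (locS hφ f) := dyadicSmall_dprod _ _ (bump_zero hφ)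

lemma dyadicSmall_SSc_locS {φ : ℝ → ℝ} (hφ : IsCutoff φ) (f : 𝓢(E2, ℂ)) :
    DyadicSmall (fun ℓ => SSc (locS hφ f ℓ)) := by
  simp_rw [locS, SSc_dprod]
  exact (dyadicSmall_dprod _ _ (SSc_zero _)).add (dyadicSmall_dprod _ _ (bump_zero hφ))

lemma dyadicSmall_SOm_locS {φ : ℝ → ℝ} (hφ : IsCutoff φ) (f : 𝓢(E2, ℂ)) :
    DyadicSmall (fun ℓ => SOm (locS hφ f ℓ)) := by
  simp_rw [locS, SOm_dprod]
  exact (dyadicSmall_dprod _ _ (SOm_zero _)).add (dyadicSmall_dprod _ _ (bump_zero hφ))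

lemma dyadicSmall_SSc_SOm_locS {φ : ℝ → ℝ} (hφ : IsCutoff φ) (f : 𝓢(E2, ℂ)) :
    DyadicSmall (fun ℓ => SSc (SOm (locS hφ f ℓ))) := by
  simp_rw [locS, SOm_dprod, SSc_add, SSc_dprod]
  exact ((dyadicSmall_dprod _ _ (SSc_zero _)).add (dyadicSmall_dprod _ _ (SOm_zero _))).add
    ((dyadicSmall_dprod _ _ (SSc_zero _)).add (dyadicSmall_dprod _ _ (bump_zero hφ)))

/-- The `ℓ`-th summand on the right-hand side, for a given number `k` of rotations. -/
def term (φ : ℝ → ℝ) (f : 𝓢(E2, ℂ)) (k : ℕ) (ℓ : ℤ) : ℝ :=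
  (2 : ℝ) ^ ((ℓ : ℝ) / 2) *
    (L2n (Sc (Om^[k] (LP φ ℓ (⇑f)))) + L2n (Om^[k] (LP φ ℓ (⇑f))))

lemma term_nonneg (φ : ℝ → ℝ) (f : 𝓢(E2, ℂ)) (k : ℕ) (ℓ : ℤ) : 0 ≤ term φ f k ℓ := by
  have h : ∀ g, 0 ≤ L2n g := fun g =>
    Real.rpow_nonneg (integral_nonneg fun x => by positivity) _
  exact mul_nonneg (by positivity) (add_nonneg (h _) (h _))

lemma term_zero {φ : ℝ → ℝ} (hφ : IsCutoff φ) (f : 𝓢(E2, ℂ)) (ℓ : ℤ) :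
    term φ f 0 ℓ = (2 : ℝ) ^ ((ℓ : ℝ) / 2) *
      (N2 (SSc (𝓕⁻ (locS hφ f ℓ))) + N2 (𝓕⁻ (locS hφ f ℓ))) := by
  rw [term, LP_eq hφ, Function.iterate_zero, id, ← coe_SSc, L2n_coe, L2n_coe]

lemma term_one {φ : ℝ → ℝ} (hφ : IsCutoff φ) (f : 𝓢(E2, ℂ)) (ℓ : ℤ) :
    term φ f 1 ℓ = (2 : ℝ) ^ ((ℓ : ℝ) / 2) *
      (N2 (SSc (SOm (𝓕⁻ (locS hφ f ℓ)))) + N2 (SOm (𝓕⁻ (locS hφ f ℓ)))) := by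
  rw [term, LP_eq hφ, Function.iterate_one, ← coe_SOm, ← coe_SSc, L2n_coe, L2n_coe]

lemma fourier_inv_locS {φ : ℝ → ℝ} (hφ : IsCutoff φ) (f : 𝓢(E2, ℂ)) (ℓ : ℤ) :
    𝓕 (𝓕⁻ (locS hφ f ℓ) : 𝓢(E2, ℂ)) = locS hφ f ℓ := FourierTransform.fourier_fourierInv_eq _

lemma summable_term_zero {φ : ℝ → ℝ} (hφ : IsCutoff φ) (f : 𝓢(E2, ℂ)) :
    Summable (term φ f 0) := by
  refine Summable.of_nonneg_of_le (term_nonneg φ f 0) (fun ℓ => ?_)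
    ((dyadicSmall_SSc_locS hφ f).summable.add ((dyadicSmall_locS hφ f).summable.mul_left 3))
  rw [term_zero hφ]
  have h1 := N2_SSc_le (𝓕⁻ (locS hφ f ℓ))
  have h2 := N2_fourier (𝓕⁻ (locS hφ f ℓ))
  rw [fourier_inv_locS] at h1 h2
  have : (0 : ℝ) < 2 ^ ((ℓ : ℝ) / 2) := by positivity
  nlinarith

lemma summable_term_one {φ : ℝ → ℝ} (hφ : IsCutoff φ) (f : 𝓢(E2, ℂ)) :
    Summable (term φ f 1) := by
  refine Summable.of_nonneg_of_le (term_nonneg φ f 1) (fun ℓ => ?_)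
    ((dyadicSmall_SSc_SOm_locS hφ f).summable.add
      ((dyadicSmall_SOm_locS hφ f).summable.mul_left 3))
  rw [term_one hφ]
  have h1 := N2_SSc_le (SOm (𝓕⁻ (locS hφ f ℓ)))
  have h2 := N2_SOm (𝓕⁻ (locS hφ f ℓ))
  rw [fourier_SOm, fourier_inv_locS] at h1
  rw [fourier_inv_locS] at h2
  have : (0 : ℝ) < 2 ^ ((ℓ : ℝ) / 2) := by positivity
  nlinarith

/-- Plancherel converts the frequency-side norms into the norms of the statement. -/
lemma freq_norms_le_term {φ : ℝ → ℝ} (hφ : IsCutoff φ) (f : 𝓢(E2, ℂ)) (ℓ : ℤ) :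
    (2 : ℝ) ^ ((ℓ : ℝ) / 2) * (N2 (SSc (locS hφ f ℓ)) + N2 (SOm (SSc (locS hφ f ℓ))))
      ≤ 2 * (term φ f 0 ℓ + term φ f 1 ℓ) := by
  rw [term_zero hφ, term_one hφ]
  have h1 := N2_SSc_fourier (𝓕⁻ (locS hφ f ℓ))
  have h2 := N2_SSc_fourier (SOm (𝓕⁻ (locS hφ f ℓ)))
  rw [fourier_SOm, fourier_inv_locS] at h2
  rw [fourier_inv_locS] at h1
  rw [SOm_SSc]
  have h3 := N2_nonneg (SSc (𝓕⁻ (locS hφ f ℓ)))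
  have h4 := N2_nonneg (SSc (SOm (𝓕⁻ (locS hφ f ℓ))))
  have : (0 : ℝ) < 2 ^ ((ℓ : ℝ) / 2) := by positivity
  rw [← mul_add, mul_left_comm]
  exact mul_le_mul_of_nonneg_left (by linarith) this.le

/-! ### Polar coordinates on an annulus -/

/-- The unit vector at angle `θ`. -/
def om (θ : ℝ) : E2 := Real.cos θ • e2 0 + Real.sin θ • e2 1

lemma om_zero_apply (θ : ℝ) : om θ 0 = Real.cos θ := by simp [om, e2]

lemma om_one_apply (θ : ℝ) : om θ 1 = Real.sin θ := by simp [om, e2]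

lemma norm_om (θ : ℝ) : ‖om θ‖ = 1 := by
  rw [EuclideanSpace.norm_eq, Fin.sum_univ_two, om_zero_apply, om_one_apply]
  simp

lemma norm_smul_om {r : ℝ} (hr : 0 ≤ r) (θ : ℝ) : ‖r • om θ‖ = r := by
  rw [norm_smul, norm_om, mul_one, Real.norm_eq_abs, abs_of_nonneg hr]

lemma continuous_om : Continuous om := by
  unfold om; fun_prop

lemma hasDerivAt_om (θ : ℝ) : HasDerivAt om (rotL (om θ)) θ := by
  have h := ((Real.hasDerivAt_cos θ).smul_const (e2 0)).fun_add
    ((Real.hasDerivAt_sin θ).smul_const (e2 1))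
  refine h.congr_deriv ?_
  rw [rotL_apply, rotv_eq, om_zero_apply, om_one_apply, neg_smul]
  abel

lemma om_periodic : Function.Periodic om (2 * Real.pi) := fun θ => by simp [om]

lemma exists_angle (x : E2) : ∃ α, x = ‖x‖ • om α := by
  refine ⟨Complex.arg ⟨x 0, x 1⟩, ?_⟩
  have hn : ‖x‖ = ‖(⟨x 0, x 1⟩ : ℂ)‖ := by
    rw [EuclideanSpace.norm_eq, Fin.sum_univ_two, Complex.norm_def, Complex.normSq_mk]
    simp [sq]
  rw [hn, om, smul_add, smul_smul, smul_smul, Complex.norm_mul_cos_arg, Complex.norm_mul_sin_arg]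
  exact vec_eq x

lemma inner_om (θ α : ℝ) : (inner ℝ (om (θ + α)) (om α) : ℝ) = Real.cos θ := by
  have : Real.cos θ = Real.cos (θ + α - α) := by ring_nf
  rw [this, Real.cos_sub, PiLp.inner_apply, Fin.sum_univ_two]
  simp only [om_zero_apply, om_one_apply]
  simp
  ring

lemma integral_polar {F : Type*} [NormedAddCommGroup F] [NormedSpace ℝ F] (G : E2 → F) :
    ∫ ξ, G ξ = ∫ p in Set.Ioi (0 : ℝ) ×ˢ Set.Ioo (-Real.pi) Real.pi,
      p.1 • G (p.1 • om p.2) := by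
  have h1 := (EuclideanSpace.volume_preserving_symm_measurableEquiv_toLp (Fin 2)).trans
    (volume_preserving_finTwoArrow ℝ)
  have h2 := (MeasurePreserving.symm ((MeasurableEquiv.toLp 2 (Fin 2 → ℝ)).symm.trans
    MeasurableEquiv.finTwoArrow) h1)
  rw [← h2.integral_comp' G, ← integral_comp_polarCoord_symm]
  congr 1
  funext p
  congr 2
  ext i
  fin_cases i <;>
    simp [om, e2, polarCoord_symm_apply, MeasurableEquiv.finTwoArrow, MeasurableEquiv.toLp] <;>
    rfl

/-- Polar coordinates for a function vanishing off the annulus `A ≤ |ξ| ≤ 4A`, with the radius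
measured in units of `A` and the angle from an arbitrary axis. -/
lemma integral_annulus {F : Type*} [NormedAddCommGroup F] [NormedSpace ℝ F] (G : E2 → F)
    (hG : Continuous G) {A : ℝ} (hA : 0 < A) (h0 : ∀ ξ, ‖ξ‖ ≤ A ∨ 4 * A < ‖ξ‖ → G ξ = 0)
    (α : ℝ) :
    ∫ ξ, G ξ = ∫ s in (1 : ℝ)..4, ∫ θ in (0 : ℝ)..(2 * Real.pi),
      (A ^ 2 * s) • G ((A * s) • om (θ + α)) := by
  have hc : Continuous fun p : ℝ × ℝ => p.1 • G (p.1 • om p.2) :=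
    continuous_fst.smul (hG.comp (continuous_fst.smul (continuous_om.comp continuous_snd)))
  have hpi := Real.pi_pos
  rw [integral_polar, setIntegral_eq_of_subset_of_forall_sdiff_eq_zero
    (s := Set.Ioc A (4 * A) ×ˢ Set.Ioo (-Real.pi) Real.pi)
    (measurableSet_Ioi.prod measurableSet_Ioo)
    (Set.prod_mono (fun r hr => hA.trans hr.1) le_rfl)]
  rotate_left
  · rintro ⟨r, θ⟩ ⟨⟨hr, hθ⟩, hn⟩
    simp only [Set.mem_Ioi] at hr
    rw [h0, smul_zero]
    simp only [norm_smul_om hr.le]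
    by_contra hcon
    push Not at hcon
    exact hn ⟨⟨hcon.1, hcon.2⟩, hθ⟩
  rw [Measure.volume_eq_prod, setIntegral_prod]
  rotate_left
  · refine (hc.continuousOn.integrableOn_compact
      ((isCompact_Icc (a := A) (b := 4 * A)).prod
        (isCompact_Icc (a := -Real.pi) (b := Real.pi)))).mono_set ?_
    exact Set.prod_mono Set.Ioc_subset_Icc_self Set.Ioo_subset_Icc_self
  simp only
  have hin : ∀ r : ℝ, ∫ θ in Set.Ioo (-Real.pi) Real.pi, r • G (r • om θ)
      = ∫ θ in (0 : ℝ)..(2 * Real.pi), r • G (r • om (θ + α)) := by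
    intro r
    rw [← integral_Ioc_eq_integral_Ioo,
      ← intervalIntegral.integral_of_le (by linarith : -Real.pi ≤ Real.pi)]
    have hper : Function.Periodic (fun θ => r • G (r • om θ)) (2 * Real.pi) := fun θ => by
      simp only [om_periodic θ]
    have := hper.intervalIntegral_add_eq (-Real.pi) (0 + α)
    rw [show -Real.pi + 2 * Real.pi = Real.pi by ring] at this
    rw [this, intervalIntegral.integral_comp_add_right (fun θ => r • G (r • om θ)),
      show 0 + α + 2 * Real.pi = 2 * Real.pi + α by ring]
  simp_rw [hin]
  rw [← intervalIntegral.integral_of_le (by linarith : A ≤ 4 * A)]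
  have := intervalIntegral.smul_integral_comp_mul_left (a := 1) (b := 4)
    (fun r => ∫ θ in (0 : ℝ)..(2 * Real.pi), r • G (r • om (θ + α))) A
  rw [mul_one, mul_comm A 4] at this
  rw [← this, ← intervalIntegral.integral_smul]
  congr 1
  funext s
  rw [← intervalIntegral.integral_smul]
  congr 1
  funext θ
  rw [smul_smul]
  congr 1
  ring

/-- Cauchy–Schwarz on a disc of radius `4A`. -/
lemma integral_norm_le_N2 (S : 𝓢(E2, ℂ)) {A : ℝ} (hA : 0 < A)
    (h0 : ∀ ξ, 4 * A < ‖ξ‖ → S ξ = 0) : ∫ ξ, ‖S ξ‖ ≤ 8 * A * N2 S := by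
  set B := Metric.closedBall (0 : E2) (4 * A)
  have hBm : MeasurableSet B := measurableSet_closedBall
  have hBv : volume B = ENNReal.ofReal ((4 * A) ^ 2 * Real.pi) := by
    rw [EuclideanSpace.volume_closedBall_fin_two, ENNReal.ofReal_mul (p := (4 * A) ^ 2) (by positivity),
      ENNReal.ofReal_pow (by positivity)]
  have hBt : volume B ≠ ⊤ := by rw [hBv]; exact ENNReal.ofReal_ne_top
  have hp : (2 : ℝ).HolderConjugate 2 := Real.HolderConjugate.two_two
  have key := integral_mul_le_Lp_mul_Lq_of_nonneg (μ := (volume : Measure E2)) hp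
    (f := fun ξ => ‖S ξ‖) (g := B.indicator fun _ => (1 : ℝ))
    (Filter.Eventually.of_forall fun ξ => norm_nonneg _)
    (Filter.Eventually.of_forall fun ξ => Set.indicator_nonneg (fun _ _ => zero_le_one) _)
    (by simpa using (S.memLp 2 volume).norm)
    (memLp_indicator_const _ hBm _ (Or.inr hBt))
  have e1 : ∀ ξ, ‖S ξ‖ * B.indicator (fun _ => (1 : ℝ)) ξ = ‖S ξ‖ := fun ξ => by
    by_cases h : ξ ∈ B
    · simp [h]
    · rw [h0 ξ (by simpa [B] using h)]; simp
  have e2' : ∀ ξ, (B.indicator (fun _ => (1 : ℝ)) ξ) ^ (2 : ℝ)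
      = B.indicator (fun _ => (1 : ℝ)) ξ := fun ξ => by
    by_cases h : ξ ∈ B <;> simp [h]
  simp_rw [e1, e2'] at key
  rw [integral_indicator_const _ hBm, measureReal_def, hBv,
    ENNReal.toReal_ofReal (by positivity)] at key
  have e3 : (∫ ξ, ‖S ξ‖ ^ (2 : ℝ)) ^ (1 / (2 : ℝ)) = N2 S := by
    rw [← L2n_coe, L2n]; simp
  rw [e3] at key
  refine key.trans ?_
  rw [mul_comm (8 * A)]
  refine mul_le_mul_of_nonneg_left ?_ (N2_nonneg S)
  rw [← Real.sqrt_eq_rpow, smul_eq_mul, mul_one]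
  refine Real.sqrt_le_iff.2 ⟨by positivity, ?_⟩
  nlinarith [Real.pi_le_four, sq_nonneg A]

/-! ### A single frequency-localised piece -/

lemma SSc_SOm_eq_zero {h : 𝓢(E2, ℂ)} {ξ : E2} (hξ : ξ ∉ tsupport h) :
    SSc h ξ = 0 ∧ SOm (SSc h) ξ = 0 := by
  have key : ∀ {g : 𝓢(E2, ℂ)} {η : E2}, η ∉ tsupport g → fderiv ℝ g η = 0 := fun {g η} hη =>
    Function.notMem_support.1 fun hc => hη (support_fderiv_subset ℝ hc)
  have hsub : tsupport (SSc h) ⊆ tsupport h :=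
    closure_minimal (fun η hη => by
      by_contra hc
      exact hη (by rw [SSc_apply, key hc]; rfl)) (isClosed_tsupport _)
  refine ⟨by rw [SSc_apply, key hξ]; rfl, ?_⟩
  rw [SOm_apply, key (fun hc => hξ (hsub hc))]; rfl

/-- The dispersive bound for a profile `h` supported in the annulus `5A/4 ≤ |ξ| ≤ 16A/5`. -/
lemma piece_bound (h : 𝓢(E2, ℂ)) {A : ℝ} (hA : 0 < A)
    (h0 : ∀ ξ, ‖ξ‖ ≤ 5 / 4 * A ∨ 16 / 5 * A < ‖ξ‖ → h ξ = 0) (x : E2) {t : ℝ} (ht : t ≠ 0) :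
    ‖∫ ξ, Complex.exp (((2 * Real.pi * inner ℝ ξ x : ℝ) : ℂ) * Complex.I) *
        (Complex.exp (-(Complex.I * (t : ℂ) * ((Real.sqrt ‖ξ‖ : ℝ) : ℂ))) * h ξ)‖
      ≤ 40000 * √A * |t|⁻¹ * (N2 (SSc h) + N2 (SOm (SSc h))) := by
  obtain ⟨α, hα⟩ := exists_angle x
  have htsupp : ∀ ξ, ‖ξ‖ ≤ A ∨ 4 * A < ‖ξ‖ → ξ ∉ tsupport h := by
    have hsub : tsupport h ⊆ {ξ | 5 / 4 * A ≤ ‖ξ‖} ∩ {ξ | ‖ξ‖ ≤ 16 / 5 * A} :=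
      closure_minimal (fun ξ hξ => by
        by_contra hc
        rw [Set.mem_inter_iff, not_and_or] at hc
        simp only [Set.mem_ofPred_eq, not_le] at hc
        exact hξ (h0 ξ (hc.imp le_of_lt id)))
        ((isClosed_le continuous_const continuous_norm).inter
          (isClosed_le continuous_norm continuous_const))
    rintro ξ hξ hmem
    have h1 : 5 / 4 * A ≤ ‖ξ‖ := (hsub hmem).1
    have h2 : ‖ξ‖ ≤ 16 / 5 * A := (hsub hmem).2
    rcases hξ with h | h <;> linarith
  have hz : ∀ ξ, ‖ξ‖ ≤ A ∨ 4 * A < ‖ξ‖ → h ξ = 0 := fun ξ hξ =>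
    image_eq_zero_of_notMem_tsupport (htsupp ξ hξ)
  -- `H = h ∘ P`; `Hs` and `Hst` are its radial and mixed derivatives
  set P : ℝ → ℝ → E2 := fun s θ => (A * s) • om (θ + α) with hP
  set Hs : ℝ → ℝ → ℂ := fun s θ => fderiv ℝ h (P s θ) (A • om (θ + α)) with hHs
  set Hst : ℝ → ℝ → ℂ := fun s θ =>
    fderiv ℝ (fderiv ℝ h) (P s θ) ((A * s) • rotL (om (θ + α))) (A • om (θ + α))
      + fderiv ℝ h (P s θ) (A • rotL (om (θ + α))) with hHst
  have dfs : Continuous (fderiv ℝ h) :=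
    (h.smooth 1).continuous_fderiv (by norm_num)
  have dfd : Differentiable ℝ (fderiv ℝ h) :=
    ((h.smooth 2).fderiv_right (m := 1) (by norm_num)).differentiable (by norm_num)
  have dff : Continuous (fderiv ℝ (fderiv ℝ h)) :=
    ((h.smooth 2).fderiv_right (m := 1) (by norm_num)).continuous_fderiv (by norm_num)
  have cO : Continuous fun q : ℝ × ℝ => om (q.2 + α) :=
    continuous_om.comp (continuous_snd.add continuous_const)
  have cP : Continuous fun q : ℝ × ℝ => P q.1 q.2 :=
    (continuous_const.mul continuous_fst).smul cO
  have cHs : Continuous fun q : ℝ × ℝ => Hs q.1 q.2 :=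
    (dfs.comp cP).clm_apply (cO.const_smul A)
  have cHst : Continuous fun q : ℝ × ℝ => Hst q.1 q.2 :=
    (((dff.comp cP).clm_apply ((continuous_const.mul continuous_fst).smul
      (rotL.continuous.comp cO))).clm_apply (cO.const_smul A)).add
      ((dfs.comp cP).clm_apply ((rotL.continuous.comp cO).const_smul A))
  have dO : ∀ θ, HasDerivAt (fun θ => om (θ + α)) (rotL (om (θ + α))) θ := fun θ => by
    have := (hasDerivAt_om (θ + α)).comp_add_const θ α
    exact this
  have dPθ : ∀ s θ, HasDerivAt (fun θ => P s θ) ((A * s) • rotL (om (θ + α))) θ :=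
    fun s θ => (dO θ).const_smul (A * s)
  have dPs : ∀ s θ, HasDerivAt (fun s => P s θ) (A • om (θ + α)) s := fun s θ => by
    have := ((hasDerivAt_id s).const_mul A).smul_const (om (θ + α))
    rw [mul_one] at this
    exact this
  have hs : ∀ s θ, HasDerivAt (fun s => h (P s θ)) (Hs s θ) s := fun s θ =>
    (h.hasFDerivAt (P s θ)).comp_hasDerivAt s (dPs s θ)
  have hst : ∀ s θ, HasDerivAt (fun θ => Hs s θ) (Hst s θ) θ := fun s θ =>
    (((dfd (P s θ)).hasFDerivAt.comp_hasDerivAt θ (dPθ s θ)).clm_apply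
      ((dO θ).const_smul A))
  have nP : ∀ {s : ℝ}, 0 ≤ s → ∀ θ, ‖P s θ‖ = A * s := fun {s} hs θ =>
    norm_smul_om (by positivity) _
  have eHs : ∀ {s : ℝ}, 0 < s → ∀ θ, Hs s θ = s⁻¹ • SSc h (P s θ) := fun {s} hs θ => by
    rw [SSc_apply, ← map_smul, hHs, hP]
    simp only
    congr 1
    rw [smul_smul]
    congr 1
    field_simp
  have eHst : ∀ {s : ℝ}, 0 < s → ∀ θ, Hst s θ = s⁻¹ • SOm (SSc h) (P s θ) := fun {s} hs θ => by
    refine (hst s θ).unique ?_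
    have h1 := (((SSc h).hasFDerivAt (P s θ)).comp_hasDerivAt θ (dPθ s θ)).const_smul s⁻¹
    have e : (fun θ => Hs s θ) = fun θ => s⁻¹ • SSc h (P s θ) := funext (eHs hs)
    rw [e, SOm_apply, ← rotL_apply, hP]
    simp only [map_smul] at h1 ⊢
    exact h1
  have core := polar_core (H := fun s θ => h (P s θ)) hs hst cHs cHst
    (fun θ => hz _ (Or.inl (by rw [nP zero_le_one, mul_one])))
    (fun θ => h0 _ (Or.inr (by rw [nP (by norm_num)]; linarith)))
    (2 * Real.pi * ‖x‖ * A) (t := t * √A) (mul_ne_zero ht (Real.sqrt_pos.2 hA).ne')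
  have amp : ∫ s in (1 : ℝ)..4, ∫ θ in (0 : ℝ)..(2 * Real.pi), (‖Hs s θ‖ + ‖Hst s θ‖)
      ≤ (A ^ 2)⁻¹ * (8 * A * (N2 (SSc h) + N2 (SOm (SSc h)))) := by
    have cS : Continuous fun ξ => ‖SSc h ξ‖ + ‖SOm (SSc h) ξ‖ :=
      (SSc h).continuous.norm.add (SOm (SSc h)).continuous.norm
    have e := integral_annulus (fun ξ => ‖SSc h ξ‖ + ‖SOm (SSc h) ξ‖) cS hA
      (fun ξ hξ => by
        obtain ⟨a, b⟩ := SSc_SOm_eq_zero (htsupp ξ hξ)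
        rw [a, b]; simp) α
    rw [integral_add (SSc h).integrable.norm (SOm (SSc h)).integrable.norm] at e
    have b1 := integral_norm_le_N2 (SSc h) hA
      fun ξ hξ => (SSc_SOm_eq_zero (htsupp ξ (Or.inr hξ))).1
    have b2 := integral_norm_le_N2 (SOm (SSc h)) hA
      fun ξ hξ => (SSc_SOm_eq_zero (htsupp ξ (Or.inr hξ))).2
    have b3 : ∫ s in (1 : ℝ)..4, ∫ θ in (0 : ℝ)..(2 * Real.pi), (‖Hs s θ‖ + ‖Hst s θ‖)
        ≤ (A ^ 2)⁻¹ * ∫ s in (1 : ℝ)..4, ∫ θ in (0 : ℝ)..(2 * Real.pi),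
          (A ^ 2 * s) • (‖SSc h (P s θ)‖ + ‖SOm (SSc h) (P s θ)‖) := by
      rw [← intervalIntegral.integral_const_mul]
      have c1 : Continuous fun q : ℝ × ℝ => ‖Hs q.1 q.2‖ + ‖Hst q.1 q.2‖ := cHs.norm.add cHst.norm
      have c2 : Continuous fun q : ℝ × ℝ =>
          (A ^ 2 * q.1) • (‖SSc h (P q.1 q.2)‖ + ‖SOm (SSc h) (P q.1 q.2)‖) :=
        (continuous_const.mul continuous_fst).smul (cS.comp cP)
      refine intervalIntegral.integral_mono_on (by norm_num)
        (Continuous.intervalIntegrable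
          (intervalIntegral.continuous_parametric_intervalIntegral_of_continuous'
            (f := fun s θ => ‖Hs s θ‖ + ‖Hst s θ‖) c1 _ _) _ _)
        (Continuous.intervalIntegrable (continuous_const.mul
          (intervalIntegral.continuous_parametric_intervalIntegral_of_continuous'
            (f := fun s θ => (A ^ 2 * s) • (‖SSc h (P s θ)‖ + ‖SOm (SSc h) (P s θ)‖)) c2 _ _)) _ _)
        fun s hs => ?_
      rw [← intervalIntegral.integral_const_mul]
      refine intervalIntegral.integral_mono_on (by positivity)
        ((c1.comp (Continuous.prodMk_right s)).intervalIntegrable _ _)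
        ((continuous_const.mul (c2.comp (Continuous.prodMk_right s))).intervalIntegrable _ _)
        fun θ _ => ?_
      have hs0 : 0 < s := by linarith [hs.1]
      rw [eHs hs0, eHst hs0, norm_smul, norm_smul, ← mul_add, smul_eq_mul, ← mul_assoc, ← mul_assoc,
        inv_mul_cancel₀ (by positivity), one_mul]
      refine mul_le_mul_of_nonneg_right ?_ (by positivity)
      rw [Real.norm_eq_abs, abs_of_pos (inv_pos.2 hs0)]
      exact (inv_le_one_of_one_le₀ hs.1).trans hs.1
    refine b3.trans ?_
    refine mul_le_mul_of_nonneg_left ?_ (by positivity)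
    rw [← e]
    linarith
  have cG : Continuous fun ξ : E2 =>
      Complex.exp (((2 * Real.pi * inner ℝ ξ x : ℝ) : ℂ) * Complex.I) *
        (Complex.exp (-(Complex.I * (t : ℂ) * ((Real.sqrt ‖ξ‖ : ℝ) : ℂ))) * h ξ) := by
    have := h.continuous
    fun_prop
  have osc_eq : ∫ ξ, Complex.exp (((2 * Real.pi * inner ℝ ξ x : ℝ) : ℂ) * Complex.I) *
        (Complex.exp (-(Complex.I * (t : ℂ) * ((Real.sqrt ‖ξ‖ : ℝ) : ℂ))) * h ξ)
      = (A ^ 2 : ℝ) • ∫ θ in (0 : ℝ)..(2 * Real.pi), ∫ s in (1 : ℝ)..4,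
        osc (2 * Real.pi * ‖x‖ * A * Real.cos θ) (t * √A) s * (s : ℂ) * h (P s θ) := by
    have cGP : Continuous fun q : ℝ × ℝ => (A ^ 2 * q.1) •
        (Complex.exp (((2 * Real.pi * inner ℝ (P q.1 q.2) x : ℝ) : ℂ) * Complex.I) *
        (Complex.exp (-(Complex.I * (t : ℂ) * ((Real.sqrt ‖P q.1 q.2‖ : ℝ) : ℂ))) *
          h (P q.1 q.2))) :=
      (continuous_const.fun_mul continuous_fst).fun_smul (cG.comp cP)
    rw [integral_annulus _ cG hA (fun ξ hξ => by rw [hz ξ hξ]; simp) α,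
      intervalIntegral_intervalIntegral_swap
        (F := fun s θ => (A ^ 2 * s) •
          (Complex.exp (((2 * Real.pi * inner ℝ (P s θ) x : ℝ) : ℂ) * Complex.I) *
          (Complex.exp (-(Complex.I * (t : ℂ) * ((Real.sqrt ‖P s θ‖ : ℝ) : ℂ))) * h (P s θ))))
        ((cGP.continuousOn.integrableOn_compact (K := Set.uIcc 1 4 ×ˢ Set.uIcc 0 (2 * Real.pi))
          (isCompact_uIcc.prod isCompact_uIcc)).mono_set
          (Set.prod_mono Set.uIoc_subset_uIcc Set.uIoc_subset_uIcc))]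
    rw [← intervalIntegral.integral_smul]
    refine intervalIntegral.integral_congr fun θ _ => ?_
    rw [← intervalIntegral.integral_smul]
    refine intervalIntegral.integral_congr fun s hs => ?_
    rw [Set.uIcc_of_le (by norm_num)] at hs
    have hs0 : 0 ≤ s := by linarith [hs.1]
    have ein : (inner ℝ (P s θ) x : ℝ) = ‖x‖ * A * s * Real.cos θ := by
      conv_lhs => rw [hα]
      rw [hP]
      simp only
      rw [inner_smul_left, inner_smul_right, inner_om]
      simp
      ring
    rw [nP hs0, ein, mul_smul, Real.sqrt_mul hA.le, osc, ← mul_assoc (Complex.exp _),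
      ← Complex.exp_add, mul_right_comm _ (s : ℂ), Complex.real_smul, Complex.real_smul,
      Complex.real_smul]
    have : ((2 * Real.pi * (‖x‖ * A * s * Real.cos θ) : ℝ) : ℂ) * Complex.I +
        -(Complex.I * (t : ℂ) * ((√A * √s : ℝ) : ℂ))
        = Complex.I * ((2 * Real.pi * ‖x‖ * A * Real.cos θ * s - t * √A * √s : ℝ) : ℂ) := by
      push_cast; ring
    rw [this]
    ring
  rw [osc_eq, norm_smul, Real.norm_eq_abs, abs_of_pos (by positivity)]
  calc A ^ 2 * _ ≤ A ^ 2 * (5000 * |t * √A|⁻¹ *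
        ((A ^ 2)⁻¹ * (8 * A * (N2 (SSc h) + N2 (SOm (SSc h)))))) := by
        gcongr
        exact core.trans (by gcongr)
    _ = _ := by
        have hq : √A * √A = A := Real.mul_self_sqrt hA.le
        have hq0 : 0 < √A := Real.sqrt_pos.2 hA
        rw [abs_mul, abs_of_pos hq0, mul_inv]
        have hAA : A * (√A)⁻¹ = √A := by
          rw [← div_eq_mul_inv, div_eq_iff hq0.ne', hq]
        have : A ^ 2 * (A ^ 2)⁻¹ = 1 := mul_inv_cancel₀ (by positivity)
        calc _ = (A ^ 2 * (A ^ 2)⁻¹) * (40000 * (A * (√A)⁻¹) * |t|⁻¹ *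
              (N2 (SSc h) + N2 (SOm (SSc h)))) := by ring
          _ = _ := by rw [this, hAA, one_mul]

/-! ### Summation over the dyadic pieces -/

/-- The contribution of frequencies `|ξ| ~ 2^ℓ` to `e^{-itΛ^{1/2}} f (x)`. -/
def flowPiece {φ : ℝ → ℝ} (hφ : IsCutoff φ) (f : 𝓢(E2, ℂ)) (t : ℝ) (x : E2) (ℓ : ℤ) : ℂ :=
  ∫ ξ, Complex.exp (((2 * Real.pi * inner ℝ ξ x : ℝ) : ℂ) * Complex.I) *
    (Complex.exp (-(Complex.I * (t : ℂ) * ((Real.sqrt ‖ξ‖ : ℝ) : ℂ))) * locS hφ f ℓ ξ)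

lemma norm_flowPiece_le {φ : ℝ → ℝ} (hφ : IsCutoff φ) (f : 𝓢(E2, ℂ)) {t : ℝ} (ht : t ≠ 0)
    (x : E2) (ℓ : ℤ) :
    ‖flowPiece hφ f t x ℓ‖ ≤ 80000 * |t|⁻¹ * (term φ f 0 ℓ + term φ f 1 ℓ) := by
  have h2 : (0 : ℝ) < 2 ^ ℓ := by positivity
  have hA : (0 : ℝ) < 2 ^ ℓ / 2 := by positivity
  have key := piece_bound (locS hφ f ℓ) hA (fun ξ hξ => locS_eq_zero hφ f ℓ (by
    rcases hξ with h | h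
    · left; linarith
    · right; linarith)) x ht
  have hsq : √((2 : ℝ) ^ ℓ / 2) ≤ (2 : ℝ) ^ ((ℓ : ℝ) / 2) := by
    have e : (2 : ℝ) ^ ((ℓ : ℝ) / 2) = √((2 : ℝ) ^ ℓ) := by
      rw [Real.sqrt_eq_rpow, ← Real.rpow_intCast, ← Real.rpow_mul (by norm_num)]
      congr 1; ring
    rw [e]
    exact Real.sqrt_le_sqrt (by linarith)
  have hN : 0 ≤ N2 (SSc (locS hφ f ℓ)) + N2 (SOm (SSc (locS hφ f ℓ))) :=
    add_nonneg (N2_nonneg _) (N2_nonneg _)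
  have hterm := freq_norms_le_term hφ f ℓ
  calc ‖flowPiece hφ f t x ℓ‖ ≤ _ := key
    _ ≤ 40000 * (2 : ℝ) ^ ((ℓ : ℝ) / 2) * |t|⁻¹ *
        (N2 (SSc (locS hφ f ℓ)) + N2 (SOm (SSc (locS hφ f ℓ)))) := by gcongr
    _ = 40000 * |t|⁻¹ * ((2 : ℝ) ^ ((ℓ : ℝ) / 2) *
        (N2 (SSc (locS hφ f ℓ)) + N2 (SOm (SSc (locS hφ f ℓ))))) := by ring
    _ ≤ 40000 * |t|⁻¹ * (2 * (term φ f 0 ℓ + term φ f 1 ℓ)) := by gcongr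
    _ = _ := by ring

/-- The symmetric range `-n ≤ ℓ ≤ n` of dyadic scales. -/
def scales (n : ℕ) : Finset ℤ := Finset.Icc (-(n : ℤ)) n

lemma sum_scales (ψ : ℤ → ℝ) (n : ℕ) :
    ∑ ℓ ∈ scales n, (ψ (-ℓ) - ψ (-ℓ + 1)) = ψ (-n) - ψ (n + 1) := by
  induction n with
  | zero => simp [scales]
  | succ n ih =>
    have e : scales (n + 1) = insert (-((n : ℤ) + 1)) (insert ((n : ℤ) + 1) (scales n)) := by
      ext z; simp only [scales, Finset.mem_Icc, Finset.mem_insert]; push_cast; omega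
    rw [e, Finset.sum_insert (by simp [scales]; omega), Finset.sum_insert (by simp [scales]), ih]
    push_cast
    rw [show -((n : ℤ) + 1) + 1 = -n by ring, neg_neg]
    ring

/-- The truncated partition of unity `φ(2^{-n}|ξ|) - φ(2^{n+1}|ξ|)`. -/
def trunc (φ : ℝ → ℝ) (n : ℕ) (ξ : E2) : ℝ :=
  φ ((2 : ℝ) ^ (-(n : ℤ)) * ‖ξ‖) - φ ((2 : ℝ) ^ ((n : ℤ) + 1) * ‖ξ‖)

lemma sum_locS {φ : ℝ → ℝ} (hφ : IsCutoff φ) (f : 𝓢(E2, ℂ)) (n : ℕ) (ξ : E2) :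
    ∑ ℓ ∈ scales n, locS hφ f ℓ ξ = (trunc φ n ξ : ℂ) * 𝓕 (⇑f) ξ := by
  simp only [locS_apply]
  rw [← Finset.sum_mul, ← Complex.ofReal_sum,
    sum_scales (fun z => φ ((2 : ℝ) ^ z * ‖ξ‖)), trunc]

lemma abs_trunc_le {φ : ℝ → ℝ} (hφ : IsCutoff φ) (n : ℕ) (ξ : E2) : |trunc φ n ξ| ≤ 1 := by
  have h1 := hφ.mem ((2 : ℝ) ^ (-(n : ℤ)) * ‖ξ‖)
  have h2 := hφ.mem ((2 : ℝ) ^ ((n : ℤ) + 1) * ‖ξ‖)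
  rw [trunc, abs_le]
  constructor <;> linarith [h1.1, h1.2, h2.1, h2.2]

lemma tendsto_trunc {φ : ℝ → ℝ} (hφ : IsCutoff φ) {ξ : E2} (hξ : ξ ≠ 0) :
    Filter.Tendsto (fun n => trunc φ n ξ) Filter.atTop (nhds 1) := by
  have hpos : 0 < ‖ξ‖ := norm_pos_iff.2 hξ
  have h2 : Filter.Tendsto (fun n : ℕ => (2 : ℝ) ^ n) Filter.atTop Filter.atTop :=
    tendsto_pow_atTop_atTop_of_one_lt (by norm_num)
  refine tendsto_const_nhds.congr' ?_
  filter_upwards [h2.eventually_ge_atTop ‖ξ‖, h2.eventually_ge_atTop (‖ξ‖⁻¹)] with n hn hn'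
  have hp : (0 : ℝ) < 2 ^ n := by positivity
  have a : (2 : ℝ) ^ (-(n : ℤ)) * ‖ξ‖ ≤ 1 := by
    rw [zpow_neg, zpow_natCast, inv_mul_le_iff₀ hp]; linarith
  have b : (2 : ℝ) ≤ (2 : ℝ) ^ ((n : ℤ) + 1) * ‖ξ‖ := by
    rw [zpow_add₀ (by norm_num), zpow_natCast, zpow_one]
    have := mul_le_mul_of_nonneg_right hn' hpos.le
    rw [inv_mul_cancel₀ hpos.ne'] at this
    linarith
  rw [trunc, hφ.eq_one (by positivity) (by linarith), hφ.eq_zero (by linarith), sub_zero]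

/-- The oscillating factor `e^{2πi⟨ξ,x⟩} e^{-it|ξ|^{1/2}}` of the integral giving the flow. -/
def flowPhase (t : ℝ) (x ξ : E2) : ℂ :=
  Complex.exp (((2 * Real.pi * inner ℝ ξ x : ℝ) : ℂ) * Complex.I) *
    Complex.exp (-(Complex.I * (t : ℂ) * ((Real.sqrt ‖ξ‖ : ℝ) : ℂ)))

lemma norm_flowPhase (t : ℝ) (x ξ : E2) : ‖flowPhase t x ξ‖ = 1 := by
  rw [flowPhase, norm_mul, Complex.norm_exp_ofReal_mul_I,
    show -(Complex.I * (t : ℂ) * ((Real.sqrt ‖ξ‖ : ℝ) : ℂ))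
      = ((-(t * Real.sqrt ‖ξ‖) : ℝ) : ℂ) * Complex.I by push_cast; ring,
    Complex.norm_exp_ofReal_mul_I, one_mul]

lemma continuous_flowPhase (t : ℝ) (x : E2) : Continuous (flowPhase t x) := by
  unfold flowPhase
  fun_prop

lemma tendsto_sum_flowPiece {φ : ℝ → ℝ} (hφ : IsCutoff φ) (f : 𝓢(E2, ℂ)) (t : ℝ) (x : E2) :
    Filter.Tendsto (fun n => ∑ ℓ ∈ scales n, flowPiece hφ f t x ℓ) Filter.atTop
      (nhds (fm (fun ξ => Complex.exp (-(Complex.I * (t : ℂ) * ((Real.sqrt ‖ξ‖ : ℝ) : ℂ))))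
        (⇑f) x)) := by
  have int : ∀ g : 𝓢(E2, ℂ), Integrable (fun ξ => flowPhase t x ξ * g ξ) := fun g =>
    g.integrable.bdd_mul (continuous_flowPhase t x).aestronglyMeasurable
      (Filter.Eventually.of_forall fun ξ => (norm_flowPhase t x ξ).le)
  have e1 : ∀ n, ∑ ℓ ∈ scales n, flowPiece hφ f t x ℓ
      = ∫ ξ, flowPhase t x ξ * ((trunc φ n ξ : ℂ) * 𝓕 (⇑f) ξ) := by
    intro n
    have e : ∀ ℓ, flowPiece hφ f t x ℓ = ∫ ξ, flowPhase t x ξ * locS hφ f ℓ ξ := fun ℓ => by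
      simp only [flowPiece, flowPhase, mul_assoc]
    simp only [e]
    rw [← integral_finsetSum _ fun ℓ _ => int (locS hφ f ℓ)]
    congr 1
    ext ξ
    rw [← Finset.mul_sum, sum_locS]
  have e2 : fm (fun ξ => Complex.exp (-(Complex.I * (t : ℂ) * ((Real.sqrt ‖ξ‖ : ℝ) : ℂ)))) (⇑f) x
      = ∫ ξ, flowPhase t x ξ * 𝓕 (⇑f) ξ := by
    rw [fm, Real.fourierInv_eq']
    simp only [smul_eq_mul, ← mul_assoc, flowPhase]
  have cF : 𝓕 (⇑f) = ⇑(𝓕 f : 𝓢(E2, ℂ)) := (SchwartzMap.fourier_coe f).symm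
  simp only [e1]
  rw [e2]
  refine tendsto_integral_of_dominated_convergence (fun ξ => ‖𝓕 (⇑f) ξ‖) ?_ ?_ ?_ ?_
  · intro n
    have := (integrable_finsetSum (scales n) fun ℓ _ => int (locS hφ f ℓ)).aestronglyMeasurable
    refine this.congr (Filter.Eventually.of_forall fun ξ => ?_)
    simp only [← Finset.mul_sum, sum_locS]
  · rw [cF]; exact (𝓕 f : 𝓢(E2, ℂ)).integrable.norm
  · intro n
    refine Filter.Eventually.of_forall fun ξ => ?_
    rw [norm_mul, norm_flowPhase, one_mul, norm_mul, Complex.norm_real, Real.norm_eq_abs]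
    exact mul_le_of_le_one_left (norm_nonneg _) (abs_trunc_le hφ n ξ)
  · filter_upwards [compl_mem_ae_iff.2 (measure_singleton (0 : E2))] with ξ hξ
    have := (Complex.continuous_ofReal.tendsto 1).comp (tendsto_trunc hφ (ξ := ξ) hξ)
    have := (this.mul_const (𝓕 (⇑f) ξ)).const_mul (flowPhase t x ξ)
    simpa using this

lemma flow_le_tsum {φ : ℝ → ℝ} (hφ : IsCutoff φ) (f : 𝓢(E2, ℂ)) {t : ℝ} (ht : t ≠ 0) (x : E2) :
    ‖fm (fun ξ => Complex.exp (-(Complex.I * (t : ℂ) * ((Real.sqrt ‖ξ‖ : ℝ) : ℂ)))) (⇑f) x‖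
      ≤ 80000 * |t|⁻¹ * (∑' ℓ, term φ f 0 ℓ + ∑' ℓ, term φ f 1 ℓ) := by
  refine le_of_tendsto (tendsto_sum_flowPiece hφ f t x).norm
    (Filter.Eventually.of_forall fun n => ?_)
  calc ‖∑ ℓ ∈ scales n, flowPiece hφ f t x ℓ‖
      ≤ ∑ ℓ ∈ scales n, 80000 * |t|⁻¹ * (term φ f 0 ℓ + term φ f 1 ℓ) :=
        (norm_sum_le _ _).trans (Finset.sum_le_sum fun ℓ _ => norm_flowPiece_le hφ f ht x ℓ)
    _ = 80000 * |t|⁻¹ * (∑ ℓ ∈ scales n, term φ f 0 ℓ + ∑ ℓ ∈ scales n, term φ f 1 ℓ) := by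
        rw [← Finset.mul_sum, Finset.sum_add_distrib]
    _ ≤ _ := by
        gcongr
        · exact (summable_term_zero hφ f).sum_le_tsum _ fun ℓ _ => term_nonneg φ f 0 ℓ
        · exact (summable_term_one hφ f).sum_le_tsum _ fun ℓ _ => term_nonneg φ f 1 ℓ

/-- **Dispersive decay for `e^{−itΛ^{1/2}}`.** -/
theorem halfwave_dispersive_estimate :
    ∀ φ : ℝ → ℝ, ContDiff ℝ (⊤ : ℕ∞) φ → (∀ x, φ x ∈ Set.Icc (0 : ℝ) 1) →
      (∀ x, φ (-x) = φ x) → Function.support φ ⊆ Set.Icc (-(8 / 5) : ℝ) (8 / 5) →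
      (∀ x ∈ Set.Icc (-(5 / 4) : ℝ) (5 / 4), φ x = 1) →
      ∃ C : ℝ, 0 < C ∧
        ∀ f : SchwartzMap E2 ℂ, ∀ t : ℝ, t ≠ 0 → ∀ x : E2,
          ‖fm (fun ξ => Complex.exp (-(Complex.I * (t : ℂ) * ((Real.sqrt ‖ξ‖ : ℝ) : ℂ))))
              (⇑f) x‖ ≤
            C * |t|⁻¹ *
              ∑ k ∈ Finset.range 4, ∑' ℓ : ℤ,
                (2 : ℝ) ^ ((ℓ : ℝ) / 2) *
                  (L2n (Sc (Om^[k] (LP φ ℓ (⇑f)))) + L2n (Om^[k] (LP φ ℓ (⇑f)))) := by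
  intro φ hs hm _ hsupp hone
  have hφ : IsCutoff φ := ⟨hs, hm, hsupp, hone⟩
  refine ⟨80000, by norm_num, fun f t ht x => (flow_le_tsum hφ f ht x).trans ?_⟩
  change _ ≤ 80000 * |t|⁻¹ * ∑ k ∈ Finset.range 4, ∑' ℓ : ℤ, term φ f k ℓ
  have hk : ∀ k, 0 ≤ ∑' ℓ : ℤ, term φ f k ℓ := fun k => tsum_nonneg (term_nonneg φ f k)
  gcongr
  simp only [Finset.sum_range_succ, Finset.sum_range_zero, zero_add]
  linarith [hk 2, hk 3]

end
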